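/- arXiv:1801.08046 — 2 statements merged into one kernel-verified Lean document; each statement's English description precedes it below -/
import Mathlib

section
/- Let T be a locally finite simplicial tree and Γ a discrete group of automorphisms of T. Let γ₀ ∈ Γ be loxodromic with translation length ℓ(γ₀) and translation axis Ax(γ₀). Let k₀ be the minimal order of the stabiliser in Γ of a vertex of Ax(γ₀), and let Γ₀ be the stabiliser of Ax(γ₀) in Γ. Then for every γ ∈ Γ − Γ₀, the length of the geodesic segment γ·Ax(γ₀) ∩ Ax(γ₀) is strictly less than (k₀ + 1)·ℓ(γ₀) − 1. -/
namespace AxisAux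

variable {V : Type*} {G : SimpleGraph V}

lemma uniq (hT : G.IsTree) {r x u w : V} (hu : G.Adj x u) (hw : G.Adj x w)
    (du : G.dist r u < G.dist r x) (dw : G.dist r w < G.dist r x) : u = w := by
  have key : ∀ a, G.Adj x a → G.dist r a < G.dist r x →
      ∃ p : G.Walk r x, p.IsPath ∧ p.penultimate = a := by
    intro a ha hd
    obtain ⟨p, hp⟩ := hT.connected.exists_walk_length_eq_dist r a
    have h1 := G.dist_le (p.concat ha.symm)
    refine ⟨p.concat ha.symm, ?_, by simp⟩
    apply SimpleGraph.Walk.isPath_of_length_eq_dist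
    rw [SimpleGraph.Walk.length_concat] at *
    omega
  obtain ⟨p, hp, rfl⟩ := key u hu du
  obtain ⟨q, hq, rfl⟩ := key w hw dw
  rw [(hT.existsUnique_path r x).unique hp hq]

lemma ray (hT : G.IsTree) (r : V) (q : ℕ → V) (m : ℕ)
    (hadj : ∀ t < m, G.Adj (q t) (q (t+1)))
    (hnb : ∀ t, t + 2 ≤ m → q t ≠ q (t+2))
    (h0 : 0 < m → G.dist r (q 0) < G.dist r (q 1)) :
    ∀ t ≤ m, G.dist r (q t) = G.dist r (q 0) + t := by
  intro t
  induction t using Nat.strong_induction_on with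
  | _ t ih =>
    intro ht
    match t with
    | 0 => simp
    | 1 =>
      have a := hT.dist_eq_dist_add_one_of_adj r (hadj 0 (by omega))
      have b := h0 (by omega)
      simp only [zero_add] at a
      omega
    | t+2 =>
      have h1 := ih (t+1) (by omega) (by omega)
      have h2 := ih t (by omega) (by omega)
      have a := hT.dist_eq_dist_add_one_of_adj r (hadj (t+1) (by omega))
      by_contra hne
      have ha := hadj (t+1) (by omega)
      have hb := hadj t (by omega)
      apply hnb t ht
      apply uniq hT (r := r) hb.symm ha
      · omega
      · rw [show t + 1 + 1 = t + 2 from rfl] at *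
        omega

lemma geod (hT : G.IsTree) (u v : V) : ∃ q : ℕ → V, q 0 = u ∧ q (G.dist u v) = v ∧
    (∀ t < G.dist u v, G.Adj (q t) (q (t+1))) ∧
    (∀ t ≤ G.dist u v, G.dist u (q t) = t) ∧
    (∀ t ≤ G.dist u v, G.dist v (q t) + t = G.dist u v) := by
  obtain ⟨p, hp⟩ := hT.connected.exists_walk_length_eq_dist u v
  have hadj : ∀ t < G.dist u v, G.Adj (p.getVert t) (p.getVert (t+1)) := by
    intro t ht
    exact p.adj_getVert_succ (by omega)
  have hv : p.getVert (G.dist u v) = v := by rw [← hp]; simp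
  have h1 : ∀ t ≤ G.dist u v, G.dist u (p.getVert t) ≤ t := by
    intro t ht
    have := G.dist_le (p.take t)
    rw [SimpleGraph.Walk.take_length] at this
    omega
  have h2 : ∀ t ≤ G.dist u v, G.dist v (p.getVert t) + t ≤ G.dist u v := by
    intro t ht
    have := G.dist_le (p.drop t)
    rw [SimpleGraph.Walk.drop_length, SimpleGraph.dist_comm] at this
    omega
  refine ⟨p.getVert, by simp, hv, hadj, ?_, ?_⟩
  all_goals
    intro t ht
    have a := h1 t ht
    have b := h2 t ht
    have c := hT.connected.dist_triangle (u := u) (v := p.getVert t) (w := v)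
    rw [G.dist_comm (u := p.getVert t) (v := v)] at c
    omega

def IsLine (G : SimpleGraph V) (p : ℤ → V) : Prop :=
  ∀ i j, G.dist (p i) (p j) = (i - j).natAbs

lemma IsLine.adj {p : ℤ → V} (h : IsLine G p) (i j : ℤ) (hij : (i - j).natAbs = 1) :
    G.Adj (p i) (p j) := by
  rw [← SimpleGraph.dist_eq_one_iff_adj, h, hij]

lemma IsLine.ne {p : ℤ → V} (h : IsLine G p) (i j : ℤ) (hij : i ≠ j) : p i ≠ p j := by
  intro e
  have := h i j
  rw [e, SimpleGraph.dist_self] at this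
  omega

lemma line_of (hT : G.IsTree) (p : ℤ → V) (hadj : ∀ i, G.Adj (p i) (p (i+1)))
    (hnb : ∀ i, p i ≠ p (i+2)) : IsLine G p := by
  have key : ∀ (i : ℤ) (t : ℕ), G.dist (p i) (p (i + t)) = t := by
    intro i t
    have := ray hT (p i) (fun t : ℕ => p (i + t)) t
      (fun s _ => by simpa [add_assoc] using hadj (i + s))
      (fun s _ => by simpa [add_assoc] using hnb (i + s))
      (fun _ => by
        have : G.dist (p i) (p (i+1)) = 1 := SimpleGraph.dist_eq_one_iff_adj.2 (hadj i)
        simp [this]) t le_rfl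
    simpa using this
  intro i j
  rcases le_total i j with h | h
  · obtain ⟨t, rfl⟩ := Int.le.dest h
    rw [key]; omega
  · obtain ⟨t, rfl⟩ := Int.le.dest h
    rw [SimpleGraph.dist_comm, key]; omega

lemma axis (hT : G.IsTree) (p : ℤ → V) (hp : IsLine G p) (σ : V → V)
    (hσ : ∀ u v, G.dist (σ u) (σ v) = G.dist u v) (c : ℕ) (hc : 0 < c)
    (hs : ∀ i, σ (p i) = p (i + c)) (v : V) :
    G.dist v (σ v) = c ↔ v ∈ Set.range p := by
  constructor
  swap
  · rintro ⟨i, rfl⟩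
    rw [hs, hp]; omega
  intro hv
  obtain ⟨i, hi⟩ : ∃ i, ∀ j, G.dist v (p i) ≤ G.dist v (p j) := by
    obtain ⟨x, ⟨i, rfl⟩, hx⟩ := wellFounded_lt.has_min (Set.range fun i => G.dist v (p i))
      ⟨_, 0, rfl⟩
    exact ⟨i, fun j => not_lt.1 (hx _ ⟨j, rfl⟩)⟩
  by_cases hm : G.dist v (p i) = 0
  · exact ⟨i, ((hT.connected.dist_eq_zero_iff).1 hm).symm⟩
  exfalso
  have hneg : ∀ t : ℕ, G.dist v (p (i - t)) = G.dist v (p i) + t := by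
    intro t
    have := ray hT v (fun t : ℕ => p (i - t)) t
      (fun s _ => hp.adj _ _ (by push_cast; omega))
      (fun s _ => hp.ne _ _ (by push_cast; omega))
      (fun _ => by
        have a := hi (i - 1)
        have b := hT.dist_ne_of_adj v (hp.adj i (i-1) (by omega))
        simp only [Nat.cast_zero, sub_zero, Nat.cast_one]
        omega) t le_rfl
    simpa using this
  have g0 : G.dist (σ v) (p i) = G.dist v (p i) + c := by
    have : p i = σ (p (i - c)) := by rw [hs]; congr 1; ring
    rw [← hneg c, this, hσ]
  have g1 : G.dist (σ v) (p (i+1)) + 1 = G.dist v (p i) + c := by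
    have : p (i+1) = σ (p (i - (c - 1 : ℕ))) := by
      rw [hs]; congr 1; push_cast [Nat.cast_sub (show 1 ≤ c from hc)]; ring
    rw [this, hσ, hneg]; omega
  have f1 := hi (i+1)
  obtain ⟨q, q0, qm, qadj, qd, qd'⟩ := geod hT (p i) v
  rw [G.dist_comm (u := p i) (v := v)] at *
  have := ray hT (σ v) q (G.dist v (p i)) qadj
    (fun t ht e => by
      have a := qd t (by omega)
      have b := qd (t+2) ht
      rw [e] at a; omega)
    (fun _ => by
      have ha := qadj 0 (by omega)
      have a := hT.dist_ne_of_adj (σ v) ha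
      have b := qd' 1 (by omega)
      rw [zero_add] at *
      by_contra hcon
      have : q 1 = p (i+1) := by
        rw [q0] at *
        apply uniq hT (r := σ v) ha (hp.adj _ _ (by omega))
        · omega
        · omega
      rw [this] at b
      omega) _ le_rfl
  rw [qm, q0, g0, SimpleGraph.dist_comm] at this
  omega

lemma exists_line (hT : G.IsTree) (g : Equiv.Perm V)
    (hg : ∀ n : ℤ, ∀ u v, G.dist ((g^n) u) ((g^n) v) = G.dist u v)
    (ℓ : ℕ) (hℓ : 0 < ℓ) (hmin : ∀ v, ℓ ≤ G.dist v (g v))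
    (hnoinv : ∀ u w : V, ¬(G.Adj u w ∧ g u = w ∧ g w = u))
    (v : V) (hv : G.dist v (g v) = ℓ) :
    ∃ p : ℤ → V, IsLine G p ∧ ∀ i, g (p i) = p (i + ℓ) := by
  obtain ⟨q, q0, qm, qadj, qd, qd'⟩ := geod hT v (g v)
  rw [hv] at *
  set p : ℤ → V := fun i => (g ^ (i / (ℓ:ℤ))) (q (i % (ℓ:ℤ)).toNat) with hpdef
  have hℓ' : (ℓ : ℤ) ≠ 0 := by omega
  have hshift : ∀ i, g (p i) = p (i + ℓ) := by
    intro i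
    simp only [hpdef]
    rw [Int.add_emod_right, Int.add_ediv_of_dvd_right (dvd_refl _), Int.ediv_self hℓ',
      add_comm, zpow_add, zpow_one, Equiv.Perm.mul_apply]
  have hP' : ∀ (k : ℤ) (r : ℕ), r < ℓ → p (ℓ * k + r) = (g ^ k) (q r) := by
    intro k r hr
    simp only [hpdef]
    have e1 : ((ℓ:ℤ) * k + r) / ℓ = k := by
      rw [Int.add_comm, Int.add_mul_ediv_left _ _ hℓ', Int.ediv_eq_zero_of_lt (by omega) (by omega)]
      simp
    have e2 : ((ℓ:ℤ) * k + r) % ℓ = r := by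
      rw [Int.add_comm, Int.add_mul_emod_self_left, Int.emod_eq_of_lt (by omega) (by omega)]
    rw [e1, e2]; simp
  have hP : ∀ (k : ℤ) (r : ℕ), r ≤ ℓ → p (ℓ * k + r) = (g ^ k) (q r) := by
    intro k r hr
    rcases hr.lt_or_eq with h | rfl
    · exact hP' k r h
    · have := hP' (k+1) 0 hℓ
      rw [qm, ← q0, ← Equiv.Perm.mul_apply, ← zpow_add_one, ← this]
      congr 1; push_cast; ring
  have hdec : ∀ i : ℤ, ∃ (k : ℤ) (r : ℕ), r < ℓ ∧ i = ℓ * k + r := by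
    intro i
    have h1 := Int.emod_nonneg i hℓ'
    have h2 := Int.emod_lt_of_pos i (show (0:ℤ) < ℓ by omega)
    refine ⟨i / ℓ, (i % ℓ).toNat, by omega, ?_⟩
    rw [Int.toNat_of_nonneg h1, Int.mul_ediv_add_emod]
  have hg1 : ∀ u v, G.dist (g u) (g v) = G.dist u v := by simpa using hg 1
  refine ⟨p, line_of hT p ?_ ?_, hshift⟩
  · intro i
    obtain ⟨k, r, hr, rfl⟩ := hdec i
    have := hP k (r+1) hr
    push_cast at this
    rw [add_assoc, this, hP k r hr.le, ← SimpleGraph.dist_eq_one_iff_adj, hg,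
      SimpleGraph.dist_eq_one_iff_adj]
    exact qadj r hr
  · intro i
    obtain ⟨k, r, hr, rfl⟩ := hdec i
    rcases Nat.lt_or_ge (r+1) ℓ with h | h
    · have := hP k (r+2) h
      push_cast at this
      rw [add_assoc, this, hP k r hr.le]
      intro e
      have e := (g^k).injective e
      have a := qd r hr.le
      have b := qd (r+2) h
      rw [e] at a; omega
    · have hrl : ℓ = r + 1 := by omega
      have h1 := hP (k+1) 1 (by omega)
      have h2 : (ℓ:ℤ) * k + r + 2 = ℓ * (k+1) + (1:ℕ) := by
        rw [hrl]; push_cast; ring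
      rw [h2, h1, hP k r hr.le, zpow_add_one, Equiv.Perm.mul_apply]
      intro e
      have e := (g^k).injective e
      by_cases hr0 : r = 0
      · subst hr0
        have ha := qadj 0 hℓ
        rw [hrl] at qm
        simp only [zero_add] at *
        rw [q0] at *
        exact hnoinv v (q 1) ⟨ha, qm.symm, e.symm⟩
      · have a := hmin (q 1)
        rw [← e] at a
        have b := ray hT (q 1) (fun t => q (t+1)) (r-1) (fun t _ => qadj (t+1) (by omega))
          (fun t ht e => by
            have a := qd (t+1) (by omega)
            have b := qd (t+1+2) (by omega)
            rw [show t + 1 + 2 = t + 2 + 1 by ring] at b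
            rw [e] at a; omega)
          (fun _ => by
            have := SimpleGraph.dist_eq_one_iff_adj.2 (qadj 1 (by omega))
            simp [this]) (r-1) le_rfl
        simp only [zero_add, SimpleGraph.dist_self] at b
        rw [show r - 1 + 1 = r by omega] at b
        omega

lemma core (hT : G.IsTree) (Γ : Subgroup (Equiv.Perm V))
    (hd : ∀ g ∈ Γ, ∀ u v, G.dist (g u) (g v) = G.dist u v)
    (hdisc : ∀ v : V, {g : Equiv.Perm V | g ∈ Γ ∧ g v = v}.Finite)
    (α β : Equiv.Perm V) (hα : α ∈ Γ) (hβ : β ∈ Γ) (ℓ : ℕ) (hℓ : 0 < ℓ)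
    (p q : ℤ → V) (hp : IsLine G p) (hq : IsLine G q)
    (hαp : ∀ i, α (p i) = p (i + ℓ)) (hβq : ∀ i, β (q i) = q (i + ℓ))
    (k : ℕ) (w : ℤ) (hk : Nat.card {g : Equiv.Perm V // g ∈ Γ ∧ g (p w) = p w} = k)
    (L : ℕ) (hL : (k + 1) * ℓ ≤ L + 1) (h0 : p 0 = q 0) (h1 : p L = q L) :
    Set.range p = Set.range q := by
  have hpow : ∀ (α : Equiv.Perm V) (p : ℤ → V), (∀ i, α (p i) = p (i + ℓ)) →
      ∀ (n : ℕ) i, (α ^ n) (p i) = p (i + (n * ℓ : ℕ)) := by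
    intro α p h n
    induction n with
    | zero => simp
    | succ n ih =>
      intro i
      rw [pow_succ', Equiv.Perm.mul_apply, ih, h]
      congr 1; push_cast; ring
  have hzpow : ∀ (n : ℤ) i, (α ^ n) (p i) = p (i + n * ℓ) := by
    intro n i
    obtain ⟨m, rfl | rfl⟩ := n.eq_nat_or_neg
    · rw [zpow_natCast, hpow α p hαp]; simp
    · rw [zpow_neg, zpow_natCast, Equiv.Perm.inv_eq_iff_eq, hpow α p hαp]
      congr 1; push_cast; ring
  -- segments agree
  have hseg : ∀ t : ℕ, t ≤ L → p (L - t) = q (L - t) := by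
    intro t
    induction t with
    | zero => simpa using h1
    | succ t ih =>
      intro ht
      have ih := ih (by omega)
      have a := hp.adj (L - t) (L - (t+1 : ℕ)) (by omega)
      have b := hq.adj (L - t) (L - (t+1 : ℕ)) (by omega)
      have a1 := hp 0 (L - t)
      have a2 := hp 0 (L - (t+1 : ℕ))
      have b2 := hq 0 (L - (t+1 : ℕ))
      rw [← h0] at b2
      rw [← ih] at b
      apply uniq hT (r := p 0) a b
      · omega
      · omega
  have hseg' : ∀ t : ℕ, t ≤ L → p t = q t := by
    intro t ht
    have := hseg (L - t) (by omega)
    rw [Nat.cast_sub ht] at this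
    simpa using this
  -- translate w into the fundamental domain
  have hℓ' : (ℓ : ℤ) ≠ 0 := by omega
  obtain ⟨t, ht, m, hw⟩ : ∃ t : ℕ, t < ℓ ∧ ∃ m : ℤ, w = t + m * ℓ := by
    have h1 := Int.emod_nonneg w hℓ'
    have h2 := Int.emod_lt_of_pos w (show (0:ℤ) < ℓ by omega)
    refine ⟨(w % ℓ).toNat, by omega, w / ℓ, ?_⟩
    rw [Int.toNat_of_nonneg h1, Int.emod_add_ediv_mul]
  have hwt : (α ^ m) (p t) = p w := by rw [hzpow, hw]
  have hmΓ : α ^ m ∈ Γ := Γ.zpow_mem hα m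
  have : Finite {g : Equiv.Perm V // g ∈ Γ ∧ g (p w) = p w} := (hdisc (p w)).to_subtype
  have hfix : ∀ j : ℕ, j ≤ k → ((β ^ j)⁻¹ * α ^ j) (p t) = p t := by
    intro j hj
    have hjl : t + j * ℓ ≤ L := by nlinarith
    rw [Equiv.Perm.mul_apply, Equiv.Perm.inv_eq_iff_eq, hpow α p hαp, hseg' t (by nlinarith),
      hpow β q hβq]
    exact_mod_cast hseg' _ hjl
  let F : Fin (k+1) → {g : Equiv.Perm V // g ∈ Γ ∧ g (p w) = p w} := fun j =>
    ⟨α ^ m * ((β ^ (j:ℕ))⁻¹ * α ^ (j:ℕ)) * (α ^ m)⁻¹,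
      Γ.mul_mem (Γ.mul_mem hmΓ (Γ.mul_mem (Γ.inv_mem (Γ.pow_mem hβ _)) (Γ.pow_mem hα _)))
        (Γ.inv_mem hmΓ), by
      have e : (α ^ m)⁻¹ (p w) = p t := by rw [Equiv.Perm.inv_eq_iff_eq, hwt]
      rw [Equiv.Perm.mul_apply, Equiv.Perm.mul_apply, e, hfix _ (by omega), hwt]⟩
  obtain ⟨n, hn, hpn⟩ : ∃ n : ℕ, 0 < n ∧ β ^ n = α ^ n := by
    have hni : ¬ Function.Injective F := by
      intro hi
      have := Nat.card_le_card_of_injective F hi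
      rw [hk] at this
      simp at this
    have key : ∀ i j : ℕ, i < j → (β ^ i)⁻¹ * α ^ i = (β ^ j)⁻¹ * α ^ j →
        β ^ (j - i) = α ^ (j - i) := by
      intro i j hij e
      obtain ⟨d, rfl⟩ := Nat.exists_eq_add_of_lt hij
      have e1 : i + d + 1 - i = d + 1 := by omega
      rw [e1]
      rw [show i + d + 1 = (d+1) + i by omega, pow_add α, ← mul_assoc] at e
      have e := mul_right_cancel e
      rw [add_comm (d+1) i, pow_add, mul_inv_rev, eq_comm, mul_assoc] at e
      rw [add_comm (d+1) i] at *
      have hc : (β ^ i)⁻¹ * α ^ (d+1) = β ^ (d+1) * (β ^ i)⁻¹ := by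
        exact inv_mul_eq_iff_eq_mul.1 e
      have hcomm : (β ^ (d+1)) * (β ^ i)⁻¹ = (β ^ i)⁻¹ * β ^ (d+1) := by group
      rw [hcomm] at hc
      exact (mul_left_cancel hc).symm
    rw [Function.Injective] at hni
    push Not at hni
    obtain ⟨i, j, hij, hne⟩ := hni
    have hij : (β ^ (i:ℕ))⁻¹ * α ^ (i:ℕ) = (β ^ (j:ℕ))⁻¹ * α ^ (j:ℕ) := by
      have := congrArg Subtype.val hij
      exact mul_left_cancel (mul_right_cancel this)
    have hne' : (i:ℕ) ≠ j := fun h => hne (Fin.ext h)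
    rcases Nat.lt_or_gt_of_ne hne' with h | h
    · exact ⟨j - i, by omega, key _ _ h hij⟩
    · exact ⟨i - j, by omega, key _ _ h hij.symm⟩
  ext v
  have hnl : 0 < n * ℓ := Nat.mul_pos hn hℓ
  rw [← axis hT p hp (α ^ n : Equiv.Perm V) (hd _ (Γ.pow_mem hα n)) (n * ℓ) hnl (hpow α p hαp n) v,
    ← axis hT q hq (β ^ n : Equiv.Perm V) (hd _ (Γ.pow_mem hβ n)) (n * ℓ) hnl (hpow β q hβq n) v,
    hpn]

lemma dist_le_of_hom (hT : G.IsTree) (g : V → V) (hg : ∀ u w, G.Adj u w → G.Adj (g u) (g w))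
    (u v : V) : G.dist (g u) (g v) ≤ G.dist u v := by
  obtain ⟨p, hp⟩ := hT.connected.exists_walk_length_eq_dist u v
  let f : G →g G := ⟨g, fun {a b} h => hg a b h⟩
  have := G.dist_le (p.map f)
  rw [SimpleGraph.Walk.length_map, hp] at this
  exact this

/-- orient a line so that it goes from `p a` at time `0` to `p b` at time `|a-b|` -/
lemma orient (Γ : Subgroup (Equiv.Perm V)) (α : Equiv.Perm V) (hα : α ∈ Γ) (ℓ : ℕ) (p : ℤ → V)
    (hp : IsLine G p) (hαp : ∀ i, α (p i) = p (i + ℓ)) (a b : ℤ) :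
    ∃ (α' : Equiv.Perm V) (p' : ℤ → V), α' ∈ Γ ∧ IsLine G p' ∧ (∀ i, α' (p' i) = p' (i + ℓ)) ∧
      Set.range p' = Set.range p ∧ p' 0 = p a ∧ p' ((G.dist (p a) (p b) : ℕ) : ℤ) = p b := by
  rcases le_total a b with h | h
  · refine ⟨α, fun t => p (a + t), hα, ?_, ?_, ?_, by simp, ?_⟩
    · intro i j; rw [hp]; congr 1; ring
    · intro i; rw [hαp]; congr 1; ring
    · ext v; constructor
      · rintro ⟨t, rfl⟩; exact ⟨_, rfl⟩
      · rintro ⟨t, rfl⟩; exact ⟨t - a, by simp⟩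
    · rw [hp]; dsimp only; congr 1; omega
  · refine ⟨α⁻¹, fun t => p (a - t), Γ.inv_mem hα, ?_, ?_, ?_, by simp, ?_⟩
    · intro i j; rw [hp]; omega
    · intro i; rw [Equiv.Perm.inv_eq_iff_eq, hαp]; congr 1; ring
    · ext v; constructor
      · rintro ⟨t, rfl⟩; exact ⟨_, rfl⟩
      · rintro ⟨t, rfl⟩; exact ⟨a - t, by simp⟩
    · rw [hp]; dsimp only; congr 1; omega

end AxisAux

/-- Let `T` be a locally finite simplicial tree and `Γ` a discrete group of
automorphisms of `T` (vertex stabilisers are finite). Let `γ₀ ∈ Γ` be loxodromic (no fixed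
vertex and no inverted edge) with translation length `ℓ(γ₀) = min_v d(v, γ₀ v) > 0` and
translation axis `Ax(γ₀) = {v : d(v, γ₀ v) = ℓ(γ₀)}`. Let `k₀` be the minimal order of the
stabiliser in `Γ` of a vertex of `Ax(γ₀)` and let `Γ₀` be the stabiliser of `Ax(γ₀)` in `Γ`.
Then for every `γ ∈ Γ − Γ₀`, the length of the geodesic segment `γ·Ax(γ₀) ∩ Ax(γ₀)` is
strictly less than `(k₀ + 1)·ℓ(γ₀) − 1`. -/
theorem axis_intersection_length_lt
    {V : Type*} (G : SimpleGraph V) (hT : G.IsTree)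
    (hlf : ∀ v : V, (G.neighborSet v).Finite)
    (Γ : Subgroup (Equiv.Perm V))
    (hΓG : ∀ g ∈ Γ, ∀ u w : V, G.Adj (g u) (g w) ↔ G.Adj u w)
    (hdisc : ∀ v : V, {g : Equiv.Perm V | g ∈ Γ ∧ g v = v}.Finite)
    (γ₀ : Equiv.Perm V) (hγ₀Γ : γ₀ ∈ Γ)
    (ℓ : ℕ) (hℓpos : 0 < ℓ)
    (hmin : ∀ v : V, ℓ ≤ G.dist v (γ₀ v))
    (hnoinv : ∀ u w : V, ¬(G.Adj u w ∧ γ₀ u = w ∧ γ₀ w = u))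
    (Ax : Set V) (hAx : Ax = {v : V | G.dist v (γ₀ v) = ℓ}) (hAxne : Ax.Nonempty)
    (k₀ : ℕ)
    (hk₀ : IsLeast {n : ℕ | ∃ v ∈ Ax, Nat.card {g : Equiv.Perm V // g ∈ Γ ∧ g v = v} = n} k₀)
    (γ : Equiv.Perm V) (hγΓ : γ ∈ Γ) (hγnot : γ '' Ax ≠ Ax) :
    ∀ x ∈ Ax ∩ γ '' Ax, ∀ y ∈ Ax ∩ γ '' Ax,
      (G.dist x y : ℤ) < (k₀ + 1 : ℤ) * ℓ - 1 := by
  have hd : ∀ g ∈ Γ, ∀ u v, G.dist (g u) (g v) = G.dist u v := by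
    have key : ∀ g ∈ Γ, ∀ u v, G.dist (g u) (g v) ≤ G.dist u v := fun g hg u v =>
      AxisAux.dist_le_of_hom hT g (fun a b h => (hΓG g hg a b).2 h) u v
    intro g hg u v
    refine le_antisymm (key g hg u v) ?_
    simpa using key g⁻¹ (Γ.inv_mem hg) (g u) (g v)
  obtain ⟨v0, hv0⟩ := hAxne
  rw [hAx] at hv0
  obtain ⟨p, hp, hps⟩ := AxisAux.exists_line hT γ₀ (fun n => hd _ (Γ.zpow_mem hγ₀Γ n)) ℓ hℓpos
    hmin hnoinv v0 hv0
  have hAxp : Ax = Set.range p := by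
    ext v
    rw [hAx]
    exact AxisAux.axis hT p hp γ₀ (hd _ hγ₀Γ) ℓ hℓpos hps v
  have hq : AxisAux.IsLine G (fun i => γ (p i)) := by
    intro i j; rw [hd _ hγΓ, hp]
  have hqs : ∀ i, (γ * γ₀ * γ⁻¹) (γ (p i)) = γ (p (i + ℓ)) := by
    intro i; simp [Equiv.Perm.mul_apply, hps]
  have hqr : γ '' Ax = Set.range (fun i => γ (p i)) := by
    rw [hAxp, ← Set.range_comp]; rfl
  rintro x ⟨hx1, hx2⟩ y ⟨hy1, hy2⟩
  by_contra hcon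
  push Not at hcon
  apply hγnot
  obtain ⟨⟨w, hw, hwk⟩, -⟩ := hk₀
  rw [hqr] at hx2 hy2 ⊢
  rw [hAxp] at hx1 hy1 hw ⊢
  obtain ⟨a, rfl⟩ := hx1
  obtain ⟨b, rfl⟩ := hy1
  obtain ⟨c, hc⟩ := hx2
  obtain ⟨d, hd'⟩ := hy2
  obtain ⟨α, p', hα, hp', hps', hr', h0, h1⟩ := AxisAux.orient Γ γ₀ hγ₀Γ ℓ p hp hps a b
  obtain ⟨β, q', hβ, hq', hqs', hr'', h0', h1'⟩ := AxisAux.orient Γ (γ * γ₀ * γ⁻¹)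
    (Γ.mul_mem (Γ.mul_mem hγΓ hγ₀Γ) (Γ.inv_mem hγΓ)) ℓ _ hq hqs c d
  simp only at hc hd'
  simp only [hc, hd'] at h0' h1'
  rw [← hr'] at hw
  obtain ⟨w, rfl⟩ := hw
  rw [← hr', ← hr'']
  symm
  apply AxisAux.core hT Γ hd hdisc α β hα hβ ℓ hℓpos p' q' hp' hq' hps' hqs' k₀ w hwk
    (G.dist (p a) (p b)) _ (h0.trans h0'.symm) (h1.trans h1'.symm)
  zify
  linarith
end

section
/- Let φ = [overline{Y}] ∈ F_q((Y⁻¹)) be the root of X² = YX + 1 with |φ| = q. Then the quadratic Lagrange spectrum of φ is exactly Sp(φ) = {0} ∪ {q^{−n−2} : n ∈ N}. -/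
open scoped Classical
open Filter

/-- The canonical image of a polynomial `P ∈ 𝔽_q[Y]` in `𝔽_q((Y⁻¹))`, modelled as
`LaurentSeries F` in the variable `X = Y⁻¹`, so `Y = single (-1) 1`. -/
noncomputable def polyY {F : Type*} [Field F] (P : Polynomial F) : LaurentSeries F :=
  Polynomial.aeval (HahnSeries.single (-1 : ℤ) (1 : F)) P

/-- The nonarchimedean absolute value `|x| = q^{-v(x)}` on `𝔽_q((Y⁻¹))`, where `v` is the
order of vanishing in the variable `Y⁻¹` (and `|0| = 0`). -/
noncomputable def labs {F : Type*} [Field F] [Fintype F] (x : LaurentSeries F) : ℝ :=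
  if x = 0 then 0 else (Fintype.card F : ℝ) ^ (-x.order)

/-- The set of pairs `(β, β^σ)` where `β` runs through
`Θ_α = PGL₂(𝔽_q[Y])·{α, α^σ}` (projective action by homographies) and `β^σ` is the
corresponding Galois conjugate. -/
noncomputable def thetaPairs {F : Type*} [Field F] (α ασ : LaurentSeries F) :
    Set (LaurentSeries F × LaurentSeries F) :=
  {p | ∃ a b c d : Polynomial F, IsUnit (a * d - b * c) ∧
    (p = ((polyY a * α + polyY b) / (polyY c * α + polyY d),
          (polyY a * ασ + polyY b) / (polyY c * ασ + polyY d)) ∨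
     p = ((polyY a * ασ + polyY b) / (polyY c * ασ + polyY d),
          (polyY a * α + polyY b) / (polyY c * α + polyY d)))}

/-- The orbit `Θ_α = PGL₂(𝔽_q[Y])·{α, α^σ}` itself. -/
noncomputable def theta {F : Type*} [Field F] (α ασ : LaurentSeries F) :
    Set (LaurentSeries F) :=
  Prod.fst '' thetaPairs α ασ

/-- The filter expressing `β ∈ Θ_α` with `|β − β^σ| → 0`. -/
noncomputable def thetaFilter {F : Type*} [Field F] [Fintype F] (α ασ : LaurentSeries F) :
    Filter (LaurentSeries F × LaurentSeries F) :=
  Filter.principal (thetaPairs α ασ) ⊓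
    Filter.comap (fun p => labs (p.1 - p.2)) (nhds 0)

/-- The quadratic approximation constant
`c_α(x) = liminf_{β ∈ Θ_α, |β−β^σ|→0} |x−β|/|β−β^σ|`. -/
noncomputable def capprox {F : Type*} [Field F] [Fintype F] (α ασ x : LaurentSeries F) : ℝ :=
  Filter.liminf (fun p => labs (x - p.1) / labs (p.1 - p.2)) (thetaFilter α ασ)

/-- `x` is rational, i.e. belongs to `K = 𝔽_q(Y)` inside `K̂ = 𝔽_q((Y⁻¹))`. -/
def IsRatL {F : Type*} [Field F] (x : LaurentSeries F) : Prop :=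
  ∃ r : RatFunc F, (r : LaurentSeries F) = x

/-- The quadratic Lagrange spectrum
`Sp(α) = {c_α(x) : x ∈ K̂ − (K ∪ Θ_α)}`. -/
noncomputable def quadSpectrum {F : Type*} [Field F] [Fintype F] (α ασ : LaurentSeries F) :
    Set ℝ :=
  {c | ∃ x : LaurentSeries F, ¬ IsRatL x ∧ x ∉ theta α ασ ∧ c = capprox α ασ x}

section basics
variable {F : Type*} [Field F]

theorem polyY_add (P Q : Polynomial F) : polyY (P + Q) = polyY P + polyY Q := map_add _ _ _
theorem polyY_sub (P Q : Polynomial F) : polyY (P - Q) = polyY P - polyY Q := map_sub _ _ _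
theorem polyY_mul (P Q : Polynomial F) : polyY (P * Q) = polyY P * polyY Q := map_mul _ _ _
theorem polyY_neg (P : Polynomial F) : polyY (-P) = -polyY P := map_neg _ _
theorem polyY_pow (P : Polynomial F) (n : ℕ) : polyY (P ^ n) = polyY P ^ n := map_pow _ _ _
theorem polyY_one : polyY (1 : Polynomial F) = 1 := map_one _
theorem polyY_zero : polyY (0 : Polynomial F) = 0 := map_zero _
theorem polyY_X : polyY (Polynomial.X : Polynomial F) = HahnSeries.single (-1 : ℤ) (1 : F) := by
  simp [polyY]

theorem single_neg_pow (n : ℕ) : (HahnSeries.single (-1 : ℤ) (1 : F)) ^ n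
    = HahnSeries.single (-(n : ℤ)) (1 : F) := by
  rw [HahnSeries.single_pow]; simp

theorem algMapC (a : F) : algebraMap F (LaurentSeries F) a = HahnSeries.single (0 : ℤ) a := by
  rw [HahnSeries.algebraMap_apply']
  simp

open RatFunc in
theorem ratC (a : F) : algebraMap (RatFunc F) (LaurentSeries F) (RatFunc.C a)
    = algebraMap F (LaurentSeries F) a := by
  rw [algMapC, ← RatFunc.algebraMap_C,
    ← IsScalarTower.algebraMap_apply (Polynomial F) (RatFunc F) (LaurentSeries F)]
  simp

theorem polyY_monomial (n : ℕ) (a : F) :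
    polyY (Polynomial.monomial n a) = HahnSeries.single (-(n : ℤ)) a := by
  unfold polyY
  rw [Polynomial.aeval_monomial, single_neg_pow, algMapC, HahnSeries.single_mul_single]
  simp

theorem polyY_coeff (P : Polynomial F) (k : ℕ) : (polyY P).coeff (-(k : ℤ)) = P.coeff k := by
  induction P using Polynomial.induction_on' with
  | add p q hp hq => rw [polyY_add, HahnSeries.coeff_add, hp, hq, Polynomial.coeff_add]
  | monomial n a =>
    rw [polyY_monomial, HahnSeries.coeff_single, Polynomial.coeff_monomial]
    by_cases h : n = k
    · subst h; simp
    · rw [if_neg, if_neg h]; omega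

theorem polyY_coeff_pos (P : Polynomial F) (k : ℤ) (hk : 0 < k) : (polyY P).coeff k = 0 := by
  induction P using Polynomial.induction_on' with
  | add p q hp hq => rw [polyY_add, HahnSeries.coeff_add, hp, hq, add_zero]
  | monomial n a =>
    rw [polyY_monomial, HahnSeries.coeff_single, if_neg]; omega

theorem polyY_inj {P : Polynomial F} (h : polyY P = 0) : P = 0 := by
  ext k; rw [← polyY_coeff, h]; simp

open RatFunc in
theorem isRatL_of_lin {x : LaurentSeries F} {A B : Polynomial F} (hA : A ≠ 0)
    (h : polyY A * x + polyY B = 0) : IsRatL x := by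
  have key : ∀ P : Polynomial F, ∃ r : RatFunc F, (r : LaurentSeries F) = polyY P := by
    intro P
    have key0 : ∀ a : F, algebraMap (RatFunc F) (LaurentSeries F) (algebraMap F (RatFunc F) a)
        = algebraMap F (LaurentSeries F) a := by
      intro a
      exact ratC a
    refine ⟨Polynomial.aeval (RatFunc.X⁻¹) P, ?_⟩
    have : (algebraMap (RatFunc F) (LaurentSeries F)) (RatFunc.X⁻¹)
      = HahnSeries.single (-1 : ℤ) (1 : F) := by
      rw [map_inv₀, RatFunc.coe_X, HahnSeries.inv_single]; simp
    rw [polyY, ← this]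
    induction P using Polynomial.induction_on' with
    | add p q hp hq => simp only [map_add, hp, hq]
    | monomial n a =>
      simp only [Polynomial.aeval_monomial, map_mul, map_pow]
      congr 1
      exact key0 a
  obtain ⟨a, ha⟩ := key A
  obtain ⟨b, hb⟩ := key B
  refine ⟨-b / a, ?_⟩
  have hA' : polyY A ≠ 0 := fun h' => hA (polyY_inj h')
  rw [map_div₀, map_neg, ha, hb, div_eq_iff hA']
  linear_combination -h

open RatFunc in
theorem lin_of_isRatL {x : LaurentSeries F} (h : IsRatL x) :
    ∃ A B : Polynomial F, A ≠ 0 ∧ polyY A * x + polyY B = 0 := by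
  obtain ⟨r, rfl⟩ := h
  have key : ∀ p : Polynomial F, polyY p.reverse
      = (algebraMap (RatFunc F) (LaurentSeries F) (algebraMap _ _ p)) * polyY (Polynomial.X ^ p.natDegree) := by
    intro p
    have h1 : (HahnSeries.single (1 : ℤ) (1 : F)) * HahnSeries.single (-1 : ℤ) (1 : F) = 1 := by
      rw [HahnSeries.single_mul_single]; simp
    let _ : Invertible (HahnSeries.single (1 : ℤ) (1 : F)) :=
      ⟨HahnSeries.single (-1 : ℤ) (1 : F), by rw [mul_comm]; exact h1, h1⟩
    have h2 := Polynomial.eval₂_reverse_mul_pow (algebraMap F (LaurentSeries F))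
      (HahnSeries.single (1 : ℤ) (1 : F)) p
    have h3 : (algebraMap (RatFunc F) (LaurentSeries F) (algebraMap _ _ p))
        = Polynomial.eval₂ (algebraMap F (LaurentSeries F)) (HahnSeries.single (1 : ℤ) (1 : F)) p := by
      rw [← RatFunc.coe_X (F := F)]
      clear h2
      induction p using Polynomial.induction_on' with
      | add p q hp hq => simp only [map_add, hp, hq, Polynomial.eval₂_add]
      | monomial n a =>
        rw [Polynomial.eval₂_monomial, ← Polynomial.C_mul_X_pow_eq_monomial]
        simp only [map_mul, map_pow, RatFunc.algebraMap_X]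
        congr 1
        rw [RatFunc.algebraMap_C, ratC]
    rw [h3, ← h2, polyY_pow, polyY_X, mul_assoc, ← mul_pow, h1, one_pow, mul_one]
    rfl
  have hx : (r : LaurentSeries F) * (algebraMap (RatFunc F) (LaurentSeries F) (algebraMap _ _ r.denom))
     = (algebraMap (RatFunc F) (LaurentSeries F) (algebraMap _ _ r.num)) := by
    rw [← map_mul]
    congr 1
    conv_lhs => rw [← RatFunc.num_div_denom r]
    rw [div_mul_eq_mul_div, div_eq_iff]
    · simp
    · simpa using r.denom_ne_zero
  refine ⟨r.denom.reverse * Polynomial.X ^ r.num.natDegree,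
    -(r.num.reverse * Polynomial.X ^ r.denom.natDegree), ?_, ?_⟩
  · simp [r.denom_ne_zero]
  · rw [polyY_neg, polyY_mul, polyY_mul, key, key, ← hx]; ring

variable [Fintype F]

theorem one_lt_q : (1 : ℝ) < (Fintype.card F : ℝ) := by
  exact_mod_cast Fintype.one_lt_card

theorem labs_zero : labs (0 : LaurentSeries F) = 0 := by simp [labs]

theorem labs_nonneg (x : LaurentSeries F) : 0 ≤ labs x := by
  unfold labs; split_ifs <;> positivity

theorem labs_of_ne {x : LaurentSeries F} (h : x ≠ 0) :
    labs x = (Fintype.card F : ℝ) ^ (-x.order) := by simp [labs, h]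

theorem labs_pos {x : LaurentSeries F} (h : x ≠ 0) : 0 < labs x := by
  rw [labs_of_ne h]; have := one_lt_q (F := F); positivity

theorem labs_eq_zero {x : LaurentSeries F} : labs x = 0 ↔ x = 0 :=
  ⟨fun h => by by_contra hx; exact (labs_pos hx).ne' h, fun h => by rw [h, labs_zero]⟩

theorem ne_of_labs_pos {x : LaurentSeries F} (h : 0 < labs x) : x ≠ 0 := by
  rintro rfl; rw [labs_zero] at h; exact lt_irrefl _ h

theorem labs_mul (x y : LaurentSeries F) : labs (x * y) = labs x * labs y := by
  by_cases hx : x = 0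
  · simp [hx, labs_zero]
  by_cases hy : y = 0
  · simp [hy, labs_zero]
  rw [labs_of_ne hx, labs_of_ne hy, labs_of_ne (mul_ne_zero hx hy), HahnSeries.order_mul hx hy,
    ← zpow_add₀ (by have := one_lt_q (F := F); positivity)]
  congr 1; ring

theorem labs_one : labs (1 : LaurentSeries F) = 1 := by
  rw [labs_of_ne one_ne_zero]; simp

theorem labs_inv (x : LaurentSeries F) : labs x⁻¹ = (labs x)⁻¹ := by
  by_cases hx : x = 0
  · simp [hx, labs_zero]
  apply eq_inv_of_mul_eq_one_left
  rw [← labs_mul, inv_mul_cancel₀ hx, labs_one]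

theorem labs_div (x y : LaurentSeries F) : labs (x / y) = labs x / labs y := by
  rw [div_eq_mul_inv, labs_mul, labs_inv, div_eq_mul_inv]

theorem labs_neg (x : LaurentSeries F) : labs (-x) = labs x := by
  simp [labs]

theorem labs_sub_comm (x y : LaurentSeries F) : labs (x - y) = labs (y - x) := by
  rw [← labs_neg, neg_sub]

theorem labs_add_le (x y : LaurentSeries F) : labs (x + y) ≤ max (labs x) (labs y) := by
  by_cases hx : x = 0
  · simp [hx]
  by_cases hy : y = 0
  · simp [hy]
  by_cases hxy : x + y = 0
  · rw [hxy, labs_zero]; exact le_max_of_le_left (labs_nonneg _)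
  rw [labs_of_ne hx, labs_of_ne hy, labs_of_ne hxy]
  have h := HahnSeries.min_order_le_order_add hxy
  have q1 := (one_lt_q (F := F)).le
  rcases min_le_iff.1 h with h | h
  · exact le_max_of_le_left (zpow_le_zpow_right₀ q1 (by omega))
  · exact le_max_of_le_right (zpow_le_zpow_right₀ q1 (by omega))

theorem labs_sub_le (x y : LaurentSeries F) : labs (x - y) ≤ max (labs x) (labs y) := by
  rw [sub_eq_add_neg, ← labs_neg y]; exact labs_add_le _ _

theorem labs_add_left {x y : LaurentSeries F} (h : labs y < labs x) : labs (x + y) = labs x := by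
  apply le_antisymm
  · exact (labs_add_le _ _).trans (max_le le_rfl h.le)
  · have := labs_sub_le (x + y) y
    rw [add_sub_cancel_right] at this
    rcases le_max_iff.1 this with h' | h'
    · exact h'
    · exact absurd h' (not_le.2 h)

theorem labs_add_right {x y : LaurentSeries F} (h : labs x < labs y) : labs (x + y) = labs y := by
  rw [add_comm]; exact labs_add_left h

theorem labs_sub_left {x y : LaurentSeries F} (h : labs y < labs x) : labs (x - y) = labs x := by
  rw [sub_eq_add_neg]; apply labs_add_left; rwa [labs_neg]

theorem labs_sub_right {x y : LaurentSeries F} (h : labs x < labs y) : labs (x - y) = labs y := by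
  rw [labs_sub_comm]; exact labs_sub_left h

theorem labs_le_iff {x : LaurentSeries F} (m : ℤ) :
    labs x ≤ (Fintype.card F : ℝ) ^ (-m) ↔ ∀ k < m, x.coeff k = 0 := by
  have q1 := one_lt_q (F := F)
  by_cases hx : x = 0
  · simp only [hx, labs_zero, HahnSeries.coeff_zero, implies_true, iff_true]; positivity
  rw [labs_of_ne hx, zpow_le_zpow_iff_right₀ q1, neg_le_neg_iff, HahnSeries.le_order_iff_forall hx]

theorem labs_zpow_cases {x : LaurentSeries F} (hx : x ≠ 0) :
    ∃ m : ℤ, labs x = (Fintype.card F : ℝ) ^ m := ⟨_, labs_of_ne hx⟩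

theorem labs_lt_one_le {x : LaurentSeries F} (h : labs x < 1) :
    labs x ≤ (Fintype.card F : ℝ)⁻¹ := by
  have q1 := one_lt_q (F := F)
  by_cases hx : x = 0
  · rw [hx, labs_zero]; positivity
  rw [labs_of_ne hx] at h ⊢
  rw [← zpow_neg_one]
  rw [← zpow_zero (Fintype.card F : ℝ), zpow_lt_zpow_iff_right₀ q1] at h
  exact zpow_le_zpow_right₀ q1.le (by omega)

theorem q_le_of_one_lt {x : LaurentSeries F} (h : 1 < labs x) :
    (Fintype.card F : ℝ) ≤ labs x := by
  have q1 := one_lt_q (F := F)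
  have h2 : labs x⁻¹ < 1 := by rw [labs_inv]; exact inv_lt_one_of_one_lt₀ h
  have h3 := labs_lt_one_le h2
  rw [labs_inv] at h3
  exact (inv_le_inv₀ (by linarith) (by linarith)).1 h3

theorem labs_polyY {P : Polynomial F} (h : P ≠ 0) :
    labs (polyY P) = (Fintype.card F : ℝ) ^ P.natDegree := by
  have h0 : polyY P ≠ 0 := fun h' => h (polyY_inj h')
  rw [labs_of_ne h0, ← zpow_natCast]
  congr 1
  have h1 : (polyY P).order ≤ -(P.natDegree : ℤ) := by
    apply HahnSeries.order_le_of_coeff_ne_zero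
    rw [polyY_coeff]; exact Polynomial.leadingCoeff_ne_zero.2 h
  have h2 : -(P.natDegree : ℤ) ≤ (polyY P).order := by
    rw [HahnSeries.le_order_iff_forall h0]
    intro k hk
    obtain ⟨n, rfl⟩ : ∃ n : ℕ, k = -(n : ℤ) := ⟨k.natAbs, by omega⟩
    rw [polyY_coeff]; apply Polynomial.coeff_eq_zero_of_natDegree_lt; omega
  omega

theorem one_le_labs_polyY {P : Polynomial F} (h : P ≠ 0) : 1 ≤ labs (polyY P) := by
  rw [labs_polyY h]; exact one_le_pow₀ (one_lt_q (F := F)).le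

theorem polyY_const {P : Polynomial F} (h : labs (polyY P) ≤ 1) : ∃ b : F, P = Polynomial.C b := by
  by_cases h0 : P = 0
  · exact ⟨0, by simp [h0]⟩
  refine ⟨P.coeff 0, Polynomial.eq_C_of_natDegree_eq_zero ?_⟩
  by_contra hd
  rw [labs_polyY h0] at h
  exact absurd h (not_le.2 (one_lt_pow₀ (one_lt_q (F := F)) hd))

theorem labs_C {u : F} (h : u ≠ 0) : labs (polyY (Polynomial.C u)) = 1 := by
  rw [labs_polyY (by simpa using h)]; simp

theorem labs_C_le (u : F) : labs (polyY (Polynomial.C u)) ≤ 1 := by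
  by_cases h : u = 0
  · simp [h, polyY_zero, labs_zero]
  · exact (labs_C h).le

theorem exists_int_part (x : LaurentSeries F) : ∃ P : Polynomial F, labs (x - polyY P) < 1 := by
  have q1 := one_lt_q (F := F)
  let N : ℕ := x.order.natAbs + 1
  let P : Polynomial F := ∑ i ∈ Finset.range N, Polynomial.monomial i (x.coeff (-(i : ℤ)))
  refine ⟨P, ?_⟩
  have : labs (x - polyY P) ≤ (Fintype.card F : ℝ) ^ (-1 : ℤ) := by
    rw [labs_le_iff]
    intro k hk
    obtain ⟨n, rfl⟩ : ∃ n : ℕ, k = -(n : ℤ) := ⟨k.natAbs, by omega⟩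
    rw [HahnSeries.coeff_sub, polyY_coeff]
    have hP : P.coeff n = if n < N then x.coeff (-(n : ℤ)) else 0 := by
      simp [P, Polynomial.coeff_monomial]
    rw [hP]
    split_ifs with h
    · simp
    · rw [sub_zero]; apply HahnSeries.coeff_eq_zero_of_lt_order; omega
  refine this.trans_lt ?_
  rw [zpow_neg_one]; exact inv_lt_one_of_one_lt₀ q1

theorem labs_small_eq_zero {x : LaurentSeries F}
    (h : ∀ k : ℕ, labs x ≤ (Fintype.card F : ℝ) ^ (-(k : ℤ))) : x = 0 := by
  ext k
  have := (labs_le_iff (x := x) ((k.natAbs + 1 : ℕ) : ℤ)).1 (h _) k (by omega)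
  simpa using this

end basics

section goldpart
variable {F : Type*} [Field F] [Fintype F]

theorem cf_irr (P : ℕ → Polynomial F) (y : ℕ → LaurentSeries F)
    (hy : ∀ n, y n = polyY (P n) + (y (n + 1))⁻¹) (h1 : ∀ n, 1 < labs (y n)) :
    ∀ (k n : ℕ) (A B : Polynomial F), A.natDegree ≤ k → polyY A * y n + polyY B = 0 → A = 0 := by
  intro k
  have q1 := one_lt_q (F := F)
  induction k with
  | zero =>
    intro n A B hA h
    by_contra hA0
    have hy0 : y (n + 1) ≠ 0 := ne_of_labs_pos (by linarith [h1 (n + 1)])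
    have h2 : polyY (A * P n + B) * y (n + 1) = - polyY A := by
      rw [polyY_add, polyY_mul]
      rw [hy n] at h
      have : polyY A * (y (n+1))⁻¹ * y (n+1) = polyY A := by field_simp
      linear_combination (y (n + 1)) * h - this
    have h3 := congrArg labs h2
    rw [labs_mul, labs_neg, labs_polyY hA0, Nat.le_zero.1 hA, pow_zero] at h3
    by_cases h4 : A * P n + B = 0
    · rw [h4, polyY_zero, labs_zero, zero_mul] at h3; norm_num at h3
    · have := one_le_labs_polyY h4
      nlinarith [h1 (n + 1)]
  | succ k ih =>
    intro n A B hA h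
    by_contra hA0
    have hy0 : y (n + 1) ≠ 0 := ne_of_labs_pos (by linarith [h1 (n + 1)])
    have h2 : polyY (A * P n + B) * y (n + 1) = - polyY A := by
      rw [polyY_add, polyY_mul]
      rw [hy n] at h
      have : polyY A * (y (n+1))⁻¹ * y (n+1) = polyY A := by field_simp
      linear_combination (y (n + 1)) * h - this
    have h3 := congrArg labs h2
    rw [labs_mul, labs_neg, labs_polyY hA0] at h3
    have h4 : A * P n + B ≠ 0 := by
      intro h4
      rw [h4, polyY_zero, labs_zero, zero_mul] at h3
      have : (0 : ℝ) < (Fintype.card F : ℝ) ^ A.natDegree := by positivity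
      linarith
    apply h4
    refine ih (n + 1) _ A ?_ (by rw [h2]; ring)
    rw [labs_polyY h4] at h3
    have h5 : (Fintype.card F : ℝ) ^ (A * P n + B).natDegree < (Fintype.card F : ℝ) ^ A.natDegree := by
      rw [← h3]
      have : (0 : ℝ) < (Fintype.card F : ℝ) ^ (A * P n + B).natDegree := by positivity
      nlinarith [h1 (n + 1)]
    rw [pow_lt_pow_iff_right₀ q1] at h5
    omega

structure Gold (φ s : LaurentSeries F) : Prop where
  add : φ + s = polyY Polynomial.X
  mul : φ * s = -1
  lab : labs φ = (Fintype.card F : ℝ)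

variable {φ s : LaurentSeries F}

theorem Gold.ne (G : Gold φ s) : φ ≠ 0 := by
  apply ne_of_labs_pos; rw [G.lab]; linarith [one_lt_q (F := F)]

theorem Gold.sne (G : Gold φ s) : s ≠ 0 := by
  intro h; have := G.mul; simp [h] at this

theorem Gold.s_eq (G : Gold φ s) : s = -φ⁻¹ := by
  have := G.ne
  field_simp
  linear_combination G.mul

theorem Gold.phi_eq (G : Gold φ s) : φ = polyY Polynomial.X + φ⁻¹ := by
  have := G.add
  rw [G.s_eq] at this
  linear_combination this

theorem Gold.slab (G : Gold φ s) : labs s = (Fintype.card F : ℝ)⁻¹ := by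
  rw [G.s_eq, labs_neg, labs_inv, G.lab]

theorem Gold.slt (G : Gold φ s) : labs s < 1 := by
  rw [G.slab]; exact inv_lt_one_of_one_lt₀ one_lt_q

theorem Gold.dlab (G : Gold φ s) : labs (φ - s) = (Fintype.card F : ℝ) := by
  rw [labs_sub_left, G.lab]
  rw [G.lab]; exact G.slt.trans one_lt_q

theorem Gold.irr (G : Gold φ s) {A B : Polynomial F} (h : polyY A * φ + polyY B = 0) :
    A = 0 ∧ B = 0 := by
  have hA : A = 0 := cf_irr (fun _ => Polynomial.X) (fun _ => φ) (fun _ => G.phi_eq)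
    (fun _ => by rw [G.lab]; exact one_lt_q) A.natDegree 0 A B le_rfl h
  refine ⟨hA, polyY_inj ?_⟩
  rw [hA, polyY_zero] at h
  simpa using h

theorem Gold.irrs (G : Gold φ s) {A B : Polynomial F} (h : polyY A * s + polyY B = 0) :
    A = 0 ∧ B = 0 := by
  have h2 : polyY (-A) * φ + polyY (A * Polynomial.X + B) = 0 := by
    rw [polyY_neg, polyY_add, polyY_mul, ← G.add]; linear_combination h
  obtain ⟨h3, h4⟩ := G.irr h2
  have h5 : A = 0 := by simpa using h3
  refine ⟨h5, ?_⟩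
  simpa [h5] using h4

theorem Gold.den (G : Gold φ s) {a b c d : Polynomial F} (h : IsUnit (a * d - b * c)) :
    polyY c * φ + polyY d ≠ 0 ∧ polyY c * s + polyY d ≠ 0 := by
  constructor
  · intro h'
    obtain ⟨rfl, rfl⟩ := G.irr h'
    simp at h
  · intro h'
    obtain ⟨rfl, rfl⟩ := G.irrs h'
    simp at h

theorem pairs_form (G : Gold φ s) {z t : LaurentSeries F} (h : (z, t) ∈ thetaPairs φ s) :
    ∃ N e : Polynomial F, ∃ u : F, N ≠ 0 ∧ u ≠ 0 ∧
      polyY N * z = polyY (Polynomial.C u) * φ + polyY e ∧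
      polyY N * t = polyY (Polynomial.C u) * s + polyY e := by
  obtain ⟨a, b, c, d, hu, h⟩ := h
  obtain ⟨h1, h2⟩ := G.den hu
  obtain ⟨u, hu0, hC⟩ := Polynomial.isUnit_iff.1 hu
  have hu1 : u ≠ 0 := hu0.ne_zero
  have hN : polyY (-c ^ 2 + c * d * Polynomial.X + d ^ 2)
      = (polyY c * φ + polyY d) * (polyY c * s + polyY d) := by
    simp only [polyY_add, polyY_neg, polyY_mul, polyY_pow, ← G.add]
    linear_combination -(polyY c) ^ 2 * G.mul
  have hN0 : -c ^ 2 + c * d * Polynomial.X + d ^ 2 ≠ 0 := by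
    intro h'
    rw [h', polyY_zero] at hN
    exact mul_ne_zero h1 h2 hN.symm
  have e1 : polyY (-c ^ 2 + c * d * Polynomial.X + d ^ 2)
      * ((polyY a * φ + polyY b) / (polyY c * φ + polyY d))
      = polyY (Polynomial.C u) * φ + polyY (b * d - a * c + b * c * Polynomial.X) := by
    rw [hN, hC]
    field_simp
    simp only [polyY_add, polyY_sub, polyY_mul, ← G.add]
    linear_combination (polyY a * polyY c) * G.mul
  have e2 : polyY (-c ^ 2 + c * d * Polynomial.X + d ^ 2)
      * ((polyY a * s + polyY b) / (polyY c * s + polyY d))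
      = polyY (Polynomial.C u) * s + polyY (b * d - a * c + b * c * Polynomial.X) := by
    rw [hN, hC]
    field_simp
    simp only [polyY_add, polyY_sub, polyY_mul, ← G.add]
    linear_combination (polyY a * polyY c) * G.mul
  rcases h with h | h
  · simp only [Prod.mk.injEq] at h
    exact ⟨_, _, u, hN0, hu1, by rw [h.1, e1], by rw [h.2, e2]⟩
  · simp only [Prod.mk.injEq] at h
    refine ⟨_, b * d - a * c + b * c * Polynomial.X + Polynomial.C u * Polynomial.X, -u, hN0,
      neg_ne_zero.2 hu1, ?_, ?_⟩
    · rw [h.1, e2, Polynomial.C_neg, polyY_neg, polyY_add _ (Polynomial.C u * _),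
        polyY_mul (Polynomial.C u), ← G.add]; ring
    · rw [h.2, e1, Polynomial.C_neg, polyY_neg, polyY_add _ (Polynomial.C u * _),
        polyY_mul (Polynomial.C u), ← G.add]; ring

theorem pairs_sub (G : Gold φ s) {z t : LaurentSeries F} (h : (z, t) ∈ thetaPairs φ s) :
    0 < labs (z - t) ∧ labs (z - t) ≤ (Fintype.card F : ℝ) := by
  obtain ⟨N, e, u, hN, hu, h1, h2⟩ := pairs_form G h
  have h3 : polyY N * (z - t) = polyY (Polynomial.C u) * (φ - s) := by
    linear_combination h1 - h2
  have h4 := congrArg labs h3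
  rw [labs_mul, labs_mul, labs_C hu, one_mul, G.dlab] at h4
  have h5 := one_le_labs_polyY hN
  have q1 := one_lt_q (F := F)
  have h6 := labs_nonneg (z - t)
  constructor
  · rcases h6.lt_or_eq with h | h
    · exact h
    · rw [← h] at h4; linarith
  · nlinarith

theorem pairs_ne_poly (G : Gold φ s) {z t : LaurentSeries F} (h : (z, t) ∈ thetaPairs φ s)
    (P : Polynomial F) : z - polyY P ≠ 0 ∧ t - polyY P ≠ 0 := by
  obtain ⟨N, e, u, hN, hu, h1, h2⟩ := pairs_form G h
  constructor
  · intro h3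
    have h4 : polyY (Polynomial.C u) * φ + polyY (e - N * P) = 0 := by
      rw [polyY_sub, polyY_mul]; linear_combination (polyY N) * h3 - h1
    have := (G.irr h4).1
    exact hu (by simpa using this)
  · intro h3
    have h4 : polyY (Polynomial.C u) * s + polyY (e - N * P) = 0 := by
      rw [polyY_sub, polyY_mul]; linear_combination (polyY N) * h3 - h2
    have := (G.irrs h4).1
    exact hu (by simpa using this)

theorem pairs_ne (G : Gold φ s) {z t : LaurentSeries F} (h : (z, t) ∈ thetaPairs φ s) :
    z ≠ 0 ∧ t ≠ 0 := by
  simpa [polyY_zero] using pairs_ne_poly G h 0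

theorem pairs_reduced (G : Gold φ s) {z t : LaurentSeries F} (h : (z, t) ∈ thetaPairs φ s)
    (hz : 1 < labs z) (ht : labs t ≤ 1) : ∃ u b : F, u ≠ 0 ∧
      z = polyY (Polynomial.C u) * φ + polyY (Polynomial.C b) ∧
      t = polyY (Polynomial.C u) * s + polyY (Polynomial.C b) := by
  obtain ⟨N, e, u, hN, hu, h1, h2⟩ := pairs_form G h
  have q1 := one_lt_q (F := F)
  have h3 : polyY N * (z - t) = polyY (Polynomial.C u) * (φ - s) := by
    linear_combination h1 - h2
  have h4 := congrArg labs h3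
  rw [labs_mul, labs_mul, labs_C hu, one_mul, G.dlab, labs_sub_left (ht.trans_lt hz)] at h4
  have h5 := one_le_labs_polyY hN
  have h6 := q_le_of_one_lt hz
  have h7 : labs (polyY N) ≤ 1 := by nlinarith
  obtain ⟨n, rfl⟩ := polyY_const h7
  have hn : n ≠ 0 := by rintro rfl; simp at hN
  have hinv : polyY (Polynomial.C n⁻¹) * polyY (Polynomial.C n) = 1 := by
    rw [← polyY_mul, ← Polynomial.C_mul, inv_mul_cancel₀ hn, Polynomial.C_1, polyY_one]
  have hz' : z = polyY (Polynomial.C (n⁻¹ * u)) * φ + polyY (Polynomial.C n⁻¹ * e) := by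
    rw [Polynomial.C_mul, polyY_mul, polyY_mul]
    linear_combination (polyY (Polynomial.C n⁻¹)) * h1 - z * hinv
  have ht' : t = polyY (Polynomial.C (n⁻¹ * u)) * s + polyY (Polynomial.C n⁻¹ * e) := by
    rw [Polynomial.C_mul, polyY_mul, polyY_mul]
    linear_combination (polyY (Polynomial.C n⁻¹)) * h2 - t * hinv
  have h8 : labs (polyY (Polynomial.C n⁻¹ * e)) ≤ 1 := by
    have h9 := labs_sub_le t (polyY (Polynomial.C (n⁻¹ * u)) * s)
    have h10 : t - polyY (Polynomial.C (n⁻¹ * u)) * s = polyY (Polynomial.C n⁻¹ * e) := by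
      rw [sub_eq_iff_eq_add, add_comm]; exact ht'
    rw [h10] at h9
    refine h9.trans (max_le ht ?_)
    rw [labs_mul]
    have := labs_C_le (n⁻¹ * u)
    have := G.slt
    have := labs_nonneg s
    have := labs_nonneg (polyY (Polynomial.C (n⁻¹ * u)))
    nlinarith
  obtain ⟨b, hb⟩ := polyY_const h8
  rw [hb] at hz' ht'
  exact ⟨n⁻¹ * u, b, mul_ne_zero (inv_ne_zero hn) hu, hz', ht'⟩

theorem pairs_fwd (G : Gold φ s) {z t : LaurentSeries F} (h : (z, t) ∈ thetaPairs φ s)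
    (P : Polynomial F) : ((z - polyY P)⁻¹, (t - polyY P)⁻¹) ∈ thetaPairs φ s := by
  obtain ⟨a, b, c, d, hu, h⟩ := h
  obtain ⟨h1, h2⟩ := G.den hu
  refine ⟨c, d, a - P * c, b - P * d, ?_, ?_⟩
  · have : c * (b - P * d) - d * (a - P * c) = -(a * d - b * c) := by ring
    rw [this]; exact hu.neg
  have e1 : ((polyY a * φ + polyY b) / (polyY c * φ + polyY d) - polyY P)⁻¹
      = (polyY c * φ + polyY d) / (polyY (a - P * c) * φ + polyY (b - P * d)) := by
    rw [div_sub' h1, inv_div]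
    simp only [polyY_sub, polyY_mul]
    congr 1; ring
  have e2 : ((polyY a * s + polyY b) / (polyY c * s + polyY d) - polyY P)⁻¹
      = (polyY c * s + polyY d) / (polyY (a - P * c) * s + polyY (b - P * d)) := by
    rw [div_sub' h2, inv_div]
    simp only [polyY_sub, polyY_mul]
    congr 1; ring
  rcases h with h | h <;> simp only [Prod.mk.injEq] at h
  · left; rw [h.1, h.2, e1, e2]
  · right; rw [h.1, h.2, e1, e2]

theorem pairs_bwd (G : Gold φ s) {z t : LaurentSeries F} (h : (z, t) ∈ thetaPairs φ s)
    (P : Polynomial F) : (polyY P + z⁻¹, polyY P + t⁻¹) ∈ thetaPairs φ s := by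
  have h1 := pairs_fwd G (pairs_fwd G (pairs_fwd G h 0) (-P)) 0
  simpa [polyY_zero, polyY_neg, add_comm] using h1

theorem pairs_self : (φ, s) ∈ thetaPairs φ s :=
  ⟨1, 0, 0, 1, by simp, by left; simp [polyY_one, polyY_zero]⟩

/-- cross ratio -/
noncomputable def crr (y δ z t : LaurentSeries F) : ℝ :=
  labs (y - z) * labs (t + δ) / (labs (z - t) * labs (y + δ))

theorem labs_pinv {p a b : LaurentSeries F} (ha : a ≠ 0) (hb : b ≠ 0) :
    labs ((p + a⁻¹) - (p + b⁻¹)) = labs (a - b) / (labs a * labs b) := by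
  rw [labs_sub_comm a b, ← labs_mul, ← labs_div]
  congr 1; field_simp; ring

theorem labs_pinv' {p a b : LaurentSeries F} (ha : a ≠ 0) (hb : p + b ≠ 0) :
    labs ((p + a⁻¹) + b) = labs (a + (p + b)⁻¹) / (labs a * labs (p + b)⁻¹) := by
  rw [← labs_mul, ← labs_div]
  congr 1; field_simp; ring

theorem crr_step {p y δ z t : LaurentSeries F} (hy : y ≠ 0) (hz : z ≠ 0) (ht : t ≠ 0)
    (hd : p + δ ≠ 0) :
    crr (p + y⁻¹) δ (p + z⁻¹) (p + t⁻¹) = crr y (p + δ)⁻¹ z t := by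
  unfold crr
  rw [labs_pinv hy hz, labs_pinv hz ht, labs_pinv' ht hd, labs_pinv' hy hd]
  have a1 := (labs_pos hy).ne'
  have a2 := (labs_pos hz).ne'
  have a3 := (labs_pos ht).ne'
  have a4 := (labs_pos (inv_ne_zero hd)).ne'
  generalize (p + δ)⁻¹ = d at *
  field_simp

theorem crr_nonneg (y δ z t : LaurentSeries F) : 0 ≤ crr y δ z t := by
  unfold crr
  have := labs_nonneg (y - z)
  have := labs_nonneg (t + δ)
  have := labs_nonneg (z - t)
  have := labs_nonneg (y + δ)
  positivity

end goldpart

section cfpart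
variable {F : Type*} [Field F] [Fintype F]

/-- continued fraction data -/
structure CFr (F : Type*) [Field F] [Fintype F] where
  P : ℕ → Polynomial F
  y : ℕ → LaurentSeries F
  δ : ℕ → LaurentSeries F
  hy : ∀ n, y n = polyY (P n) + (y (n + 1))⁻¹
  hy1 : ∀ n, 1 < labs (y n)
  hδ0 : δ 0 = 0
  hδ : ∀ n, δ (n + 1) = (polyY (P n) + δ n)⁻¹

variable {φ s : LaurentSeries F} (C : CFr F)

theorem CFr.yne (n : ℕ) : C.y n ≠ 0 := ne_of_labs_pos (by linarith [C.hy1 n])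

theorem CFr.yinv (n : ℕ) : labs (C.y n)⁻¹ < 1 := by
  rw [labs_inv]; exact inv_lt_one_of_one_lt₀ (C.hy1 n)

theorem CFr.labP (n : ℕ) : labs (polyY (C.P n)) = labs (C.y n) := by
  have h : polyY (C.P n) = C.y n - (C.y (n + 1))⁻¹ := by rw [C.hy n]; ring
  rw [h, labs_sub_left]
  exact (C.yinv _).trans (C.hy1 n)

theorem CFr.δlt (n : ℕ) : labs (C.δ n) < 1 := by
  induction n with
  | zero => rw [C.hδ0, labs_zero]; norm_num
  | succ n ih =>
    have h := C.hy1 n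
    rw [C.hδ, labs_inv, labs_add_left, C.labP]
    · exact inv_lt_one_of_one_lt₀ h
    · rw [C.labP]; linarith

theorem CFr.pdlab (n : ℕ) : labs (polyY (C.P n) + C.δ n) = labs (C.y n) := by
  have h := C.hy1 n
  have := C.δlt n
  rw [labs_add_left, C.labP]
  rw [C.labP]; linarith

theorem CFr.pd (n : ℕ) : polyY (C.P n) + C.δ n ≠ 0 := by
  apply ne_of_labs_pos
  rw [C.pdlab]; linarith [C.hy1 n]

theorem CFr.step (n : ℕ) {z t : LaurentSeries F} (hz : z ≠ 0) (ht : t ≠ 0) :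
    crr (C.y n) (C.δ n) (polyY (C.P n) + z⁻¹) (polyY (C.P n) + t⁻¹)
      = crr (C.y (n + 1)) (C.δ (n + 1)) z t := by
  rw [C.hy n, C.hδ n]
  exact crr_step (C.yne _) hz ht (C.pd n)

theorem CFr.lower (G : Gold φ s) (ρ : ℝ) (hρ : ρ ≤ (Fintype.card F : ℝ)⁻¹)
    (H : ∀ (n : ℕ) (u b : F), u ≠ 0 → ρ ≤ crr (C.y (n + 1)) (C.δ (n + 1))
      (polyY (Polynomial.C u) * φ + polyY (Polynomial.C b))
      (polyY (Polynomial.C u) * s + polyY (Polynomial.C b))) :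
    ∀ (k n : ℕ) (z t : LaurentSeries F), (z, t) ∈ thetaPairs φ s → 1 < labs z → 1 < labs t →
      (Fintype.card F : ℝ) < labs (z - t) * (Fintype.card F : ℝ) ^ k →
      ρ ≤ crr (C.y n) (C.δ n) z t := by
  have q1 := one_lt_q (F := F)
  intro k
  induction k with
  | zero =>
    intro n z t hp hz ht hk
    have := (pairs_sub G hp).2
    simp at hk
    linarith
  | succ k ih =>
    intro n z t hp hz ht hk
    have hne := pairs_ne_poly G hp (C.P n)
    have hpf := pairs_fwd G hp (C.P n)
    have hzf : polyY (C.P n) + ((z - polyY (C.P n))⁻¹)⁻¹ = z := by rw [inv_inv]; ring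
    have htf : polyY (C.P n) + ((t - polyY (C.P n))⁻¹)⁻¹ = t := by rw [inv_inv]; ring
    have hst := C.step n (inv_ne_zero hne.1) (inv_ne_zero hne.2)
    rw [hzf, htf] at hst
    by_cases h1 : labs (z - polyY (C.P n)) < 1
    · have h1' : 1 < labs (z - polyY (C.P n))⁻¹ := by
        rw [labs_inv]; exact (one_lt_inv₀ (labs_pos hne.1)).2 h1
      by_cases h2 : labs (t - polyY (C.P n)) < 1
      · have h2' : 1 < labs (t - polyY (C.P n))⁻¹ := by
          rw [labs_inv]; exact (one_lt_inv₀ (labs_pos hne.2)).2 h2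
        rw [hst]
        refine ih _ _ _ hpf h1' h2' ?_
        have hl := labs_pinv (p := polyY (C.P n)) (inv_ne_zero hne.1) (inv_ne_zero hne.2)
        rw [hzf, htf] at hl
        set Z := labs (z - polyY (C.P n))⁻¹
        set T := labs (t - polyY (C.P n))⁻¹
        set W := labs ((z - polyY (C.P n))⁻¹ - (t - polyY (C.P n))⁻¹)
        have hZ : (Fintype.card F : ℝ) ≤ Z := q_le_of_one_lt h1'
        have hW : W = labs (z - t) * (Z * T) := by
          rw [hl]; field_simp
        rw [hW]
        rw [pow_succ] at hk
        refine hk.trans_le ?_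
        have h0 := (pairs_sub G hp).1
        have : (Fintype.card F : ℝ) ≤ Z * T := by nlinarith
        calc labs (z - t) * ((Fintype.card F : ℝ) ^ k * (Fintype.card F : ℝ))
            ≤ labs (z - t) * ((Fintype.card F : ℝ) ^ k * (Z * T)) := by gcongr
          _ = _ := by ring
      · rw [hst]
        have h2' : labs (t - polyY (C.P n))⁻¹ ≤ 1 := by
          rw [labs_inv]; exact inv_le_one_of_one_le₀ (not_lt.1 h2)
        obtain ⟨u, b, hu, e1, e2⟩ := pairs_reduced G hpf h1' h2'
        rw [e1, e2]
        exact H n u b hu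
    · refine hρ.trans ?_
      have hyp : labs (C.y n - polyY (C.P n)) < 1 := by
        have : C.y n - polyY (C.P n) = (C.y (n + 1))⁻¹ := by rw [C.hy n]; ring
        rw [this]; exact C.yinv _
      have hyz : 1 ≤ labs (C.y n - z) := by
        have := labs_sub_right (x := C.y n - polyY (C.P n)) (y := z - polyY (C.P n))
          (by linarith)
        rw [sub_sub_sub_cancel_right] at this
        rw [this]; linarith
      have hy1 := C.hy1 n
      have hδ := C.δlt n
      obtain ⟨d0, dq⟩ := pairs_sub G hp
      unfold crr
      rw [labs_add_left (by linarith : labs (C.δ n) < labs t),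
        labs_add_left (by linarith : labs (C.δ n) < labs (C.y n))]
      rw [le_div_iff₀ (by positivity), inv_mul_le_iff₀ (by linarith)]
      have hqt := q_le_of_one_lt ht
      by_cases c1 : labs (C.y n) ≤ labs t
      · have : 1 * labs (C.y n) ≤ labs (C.y n - z) * labs t := by gcongr
        calc labs (z - t) * labs (C.y n) ≤ (Fintype.card F : ℝ) * (1 * labs (C.y n)) := by
              rw [one_mul]; gcongr
          _ ≤ _ := by gcongr
      · have c1 := not_le.1 c1
        by_cases c2 : labs z < labs (C.y n)
        · rw [labs_sub_left c2]
          calc labs (z - t) * labs (C.y n) ≤ labs t * labs (C.y n) := by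
                gcongr; linarith
            _ ≤ (Fintype.card F : ℝ) * (labs (C.y n) * labs t) := by
                rw [mul_comm (labs t)]
                exact le_mul_of_one_le_left (by positivity) q1.le
        · have c2 := not_lt.1 c2
          rw [labs_sub_left (by linarith)] at dq
          linarith

theorem CFr.back (G : Gold φ s) : ∀ (n : ℕ) (w t : LaurentSeries F), (w, t) ∈ thetaPairs φ s →
    1 < labs w → 1 ≤ labs t → ∃ z v, (z, v) ∈ thetaPairs φ s ∧ 1 < labs z ∧ 1 ≤ labs v ∧
      crr (C.y 0) (C.δ 0) z v = crr (C.y n) (C.δ n) w t ∧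
      labs (z - v) * (Fintype.card F : ℝ) ^ n ≤ labs (w - t) := by
  have q1 := one_lt_q (F := F)
  intro n
  induction n with
  | zero => intro w t h1 h2 h3; exact ⟨w, t, h1, h2, h3, rfl, by simp⟩
  | succ n ih =>
    intro w t hp hw ht
    obtain ⟨hw0, ht0⟩ := pairs_ne G hp
    have hP := C.hy1 n
    have a1 : labs (polyY (C.P n) + w⁻¹) = labs (C.y n) := by
      rw [labs_add_left, C.labP]
      rw [labs_inv, C.labP]; linarith [inv_lt_one_of_one_lt₀ hw]
    have a2 : labs (polyY (C.P n) + t⁻¹) = labs (C.y n) := by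
      rw [labs_add_left, C.labP]
      rw [labs_inv, C.labP]; linarith [inv_le_one_of_one_le₀ ht]
    obtain ⟨z, v, b1, b2, b3, b4, b5⟩ := ih _ _ (pairs_bwd G hp (C.P n)) (by rw [a1]; exact hP)
      (by rw [a2]; exact hP.le)
    refine ⟨z, v, b1, b2, b3, ?_, ?_⟩
    · rw [b4, C.step n hw0 ht0]
    · rw [labs_pinv hw0 ht0] at b5
      have hq := q_le_of_one_lt hw
      rw [le_div_iff₀ (by positivity)] at b5
      refine le_trans ?_ b5
      rw [pow_succ, ← mul_assoc]
      have := labs_nonneg (z - v)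
      gcongr
      nlinarith

theorem CFr.ratio (G : Gold φ s) {x z v : LaurentSeries F} {P0 : Polynomial F}
    (hx : x = polyY P0 + (C.y 0)⁻¹) (h : (z, v) ∈ thetaPairs φ s) :
    labs (x - (polyY P0 + z⁻¹)) / labs ((polyY P0 + z⁻¹) - (polyY P0 + v⁻¹))
      = crr (C.y 0) (C.δ 0) z v := by
  obtain ⟨hz, hv⟩ := pairs_ne G h
  rw [hx, labs_pinv (C.yne 0) hz, labs_pinv hz hv]
  unfold crr
  rw [C.hδ0, add_zero, add_zero]
  have a1 := (labs_pos hz).ne'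
  have a2 := (labs_pos hv).ne'
  have a3 := (labs_pos (C.yne 0)).ne'
  field_simp

theorem CFr.freq (G : Gold φ s) {x : LaurentSeries F} {P0 : Polynomial F}
    (hx : x = polyY P0 + (C.y 0)⁻¹) (ρ : ℝ)
    (H : ∀ N, ∃ n ≥ N, C.P n ≠ Polynomial.X ∧ crr (C.y (n + 1)) (C.δ (n + 1)) φ s ≤ ρ) :
    ∀ ε > 0, ∃ p ∈ thetaPairs φ s, labs (p.1 - p.2) < ε ∧
      labs (x - p.1) / labs (p.1 - p.2) ≤ ρ := by
  have q1 := one_lt_q (F := F)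
  intro ε hε
  obtain ⟨N, hN⟩ := pow_unbounded_of_one_lt ((Fintype.card F : ℝ) / ε) q1
  obtain ⟨n, hn, hP, hc⟩ := H N
  have hP1 := C.hy1 n
  have hφ : 1 < labs φ := by rw [G.lab]; exact q1
  have a1 : 1 < labs (polyY (C.P n) + φ⁻¹) := by
    rw [labs_add_left, C.labP]
    · exact hP1
    · rw [labs_inv, C.labP]; linarith [inv_lt_one_of_one_lt₀ hφ]
  have a2 : 1 ≤ labs (polyY (C.P n) + s⁻¹) := by
    have e : polyY (C.P n) + s⁻¹ = polyY (C.P n - Polynomial.X) + s := by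
      rw [polyY_sub, ← G.add]
      have := G.sne
      field_simp
      linear_combination G.mul
    have h1 := one_le_labs_polyY (sub_ne_zero.2 hP)
    rw [e, labs_add_left]
    · exact h1
    · linarith [G.slt]
  obtain ⟨z, v, b1, b2, b3, b4, b5⟩ := C.back G n _ _ (pairs_bwd G pairs_self (C.P n)) a1 a2
  obtain ⟨hz, hv⟩ := pairs_ne G b1
  refine ⟨_, pairs_bwd G b1 P0, ?_, ?_⟩
  · have h1 := (pairs_sub G (pairs_bwd G pairs_self (C.P n))).2
    dsimp only
    rw [labs_pinv hz hv]
    have hzv := labs_nonneg (z - v)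
    have h2 : labs (z - v) / (labs z * labs v) ≤ labs (z - v) :=
      div_le_self hzv (by nlinarith)
    refine h2.trans_lt ?_
    have h3 : (Fintype.card F : ℝ) / ε < (Fintype.card F : ℝ) ^ n :=
      hN.trans_le (pow_le_pow_right₀ q1.le hn)
    rw [div_lt_iff₀ hε] at h3
    by_contra h4
    have h4 := not_lt.1 h4
    have : ε * (Fintype.card F : ℝ) ^ n ≤ labs (z - v) * (Fintype.card F : ℝ) ^ n := by gcongr
    linarith
  · dsimp only
    rw [C.ratio G hx b1, b4, C.step n G.ne G.sne]
    exact hc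

theorem CFr.lower_ratio (G : Gold φ s) {x : LaurentSeries F} {P0 : Polynomial F}
    (hx : x = polyY P0 + (C.y 0)⁻¹) (ρ : ℝ) (hρ : ρ ≤ (Fintype.card F : ℝ)⁻¹)
    (H : ∀ (n : ℕ) (u b : F), u ≠ 0 → ρ ≤ crr (C.y (n + 1)) (C.δ (n + 1))
      (polyY (Polynomial.C u) * φ + polyY (Polynomial.C b))
      (polyY (Polynomial.C u) * s + polyY (Polynomial.C b))) :
    ∀ p ∈ thetaPairs φ s, labs (p.1 - p.2) < 1 → ρ ≤ labs (x - p.1) / labs (p.1 - p.2) := by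
  have q1 := one_lt_q (F := F)
  rintro ⟨β, β'⟩ hp hlt
  dsimp only at hlt ⊢
  have hpos := (pairs_sub G hp).1
  by_cases hc : labs (β - β') ≤ labs (x - β)
  · refine hρ.trans ((inv_le_one_of_one_le₀ q1.le).trans ?_)
    rwa [one_le_div hpos]
  have hc := not_le.1 hc
  have hpf := pairs_fwd G hp P0
  have hne := pairs_ne_poly G hp P0
  have hzf : polyY P0 + ((β - polyY P0)⁻¹)⁻¹ = β := by rw [inv_inv]; ring
  have htf : polyY P0 + ((β' - polyY P0)⁻¹)⁻¹ = β' := by rw [inv_inv]; ring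
  have hr := C.ratio G hx hpf
  rw [hzf, htf] at hr
  rw [hr]
  have hxP : labs (x - polyY P0) < 1 := by
    have : x - polyY P0 = (C.y 0)⁻¹ := by rw [hx]; ring
    rw [this]; exact C.yinv 0
  have h1 : labs (β - polyY P0) < 1 := by
    have := labs_sub_le (x - polyY P0) (x - β)
    rw [sub_sub_sub_cancel_left] at this
    exact this.trans_lt (max_lt hxP (by linarith))
  have h2 : labs (β' - polyY P0) < 1 := by
    have := labs_sub_le (β - polyY P0) (β - β')
    rw [sub_sub_sub_cancel_left] at this
    exact this.trans_lt (max_lt h1 (by linarith))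
  obtain ⟨k, hk⟩ := pow_unbounded_of_one_lt ((Fintype.card F : ℝ) / labs ((β - polyY P0)⁻¹ - (β' - polyY P0)⁻¹)) q1
  have h0 := (pairs_sub G hpf).1
  refine C.lower G ρ hρ H k 0 _ _ hpf ?_ ?_ ?_
  · rw [labs_inv]; exact (one_lt_inv₀ (labs_pos hne.1)).2 h1
  · rw [labs_inv]; exact (one_lt_inv₀ (labs_pos hne.2)).2 h2
  · rw [div_lt_iff₀ h0] at hk; linarith

theorem CFr.yfwd (n : ℕ) : (C.y n - polyY (C.P n))⁻¹ = C.y (n + 1) := by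
  have : C.y n - polyY (C.P n) = (C.y (n + 1))⁻¹ := by rw [C.hy n]; ring
  rw [this, inv_inv]

theorem CFr.notin1 (G : Gold φ s) : ∀ (k n : ℕ) (t : LaurentSeries F), labs t ≤ 1 →
    (C.y n, t) ∈ thetaPairs φ s → (Fintype.card F : ℝ) < labs (C.y (n + k)) → False := by
  intro k
  induction k with
  | zero =>
    intro n t ht hp hk
    have h1 := (pairs_sub G hp).2
    rw [labs_sub_left (by linarith [C.hy1 n])] at h1
    simp at hk
    linarith
  | succ k ih =>
    intro n t ht hp hk
    have hpf := pairs_fwd G hp (C.P n)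
    rw [C.yfwd] at hpf
    refine ih (n + 1) _ ?_ hpf (by rw [show n + 1 + k = n + (k + 1) by ring]; exact hk)
    have h1 := C.hy1 n
    rw [labs_inv, labs_sub_right, C.labP]
    · exact inv_le_one_of_one_le₀ h1.le
    · rw [C.labP]; linarith

theorem CFr.notin (G : Gold φ s) (H : ∀ N, ∃ n ≥ N, (Fintype.card F : ℝ) < labs (C.y n)) :
    ∀ (k n : ℕ) (t : LaurentSeries F),
    (C.y n, t) ∈ thetaPairs φ s → (Fintype.card F : ℝ) < labs (C.y n - t) * (Fintype.card F : ℝ) ^ k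
      → False := by
  have q1 := one_lt_q (F := F)
  intro k
  induction k with
  | zero =>
    intro n t hp hk
    have := (pairs_sub G hp).2
    simp at hk
    linarith
  | succ k ih =>
    intro n t hp hk
    have hpf := pairs_fwd G hp (C.P n)
    have hne := pairs_ne_poly G hp (C.P n)
    rw [C.yfwd] at hpf
    refine ih (n + 1) _ hpf ?_
    have ht : 1 < labs (t - polyY (C.P n))⁻¹ := by
      by_contra h
      obtain ⟨m, hm, hm2⟩ := H (n + 1)
      obtain ⟨j, rfl⟩ := Nat.exists_eq_add_of_le hm
      exact C.notin1 G j (n + 1) _ (not_lt.1 h) hpf hm2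
    have htf : polyY (C.P n) + ((t - polyY (C.P n))⁻¹)⁻¹ = t := by rw [inv_inv]; ring
    have hl := labs_pinv (p := polyY (C.P n)) (C.yne (n + 1)) (inv_ne_zero hne.2)
    rw [htf, ← C.hy n] at hl
    have h0 := (pairs_sub G hp).1
    have hZ := q_le_of_one_lt ht
    have hy1 := C.hy1 (n + 1)
    set T := labs (t - polyY (C.P n))⁻¹
    have hW : labs (C.y (n + 1) - (t - polyY (C.P n))⁻¹)
        = labs (C.y n - t) * (labs (C.y (n + 1)) * T) := by
      rw [hl]; field_simp
    rw [hW]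
    rw [pow_succ] at hk
    refine hk.trans_le ?_
    have : (Fintype.card F : ℝ) ≤ labs (C.y (n + 1)) * T := by nlinarith
    calc labs (C.y n - t) * ((Fintype.card F : ℝ) ^ k * (Fintype.card F : ℝ))
        ≤ labs (C.y n - t) * ((Fintype.card F : ℝ) ^ k * (labs (C.y (n + 1)) * T)) := by gcongr
      _ = _ := by ring

theorem CFr.not_theta (G : Gold φ s) {x : LaurentSeries F} {P0 : Polynomial F}
    (hx : x = polyY P0 + (C.y 0)⁻¹)
    (H : ∀ N, ∃ n ≥ N, (Fintype.card F : ℝ) < labs (C.y n)) : x ∉ theta φ s := by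
  rintro ⟨⟨x', t⟩, hp, rfl⟩
  dsimp only at hx
  have hpf := pairs_fwd G hp P0
  have : x' - polyY P0 = (C.y 0)⁻¹ := by rw [hx]; ring
  rw [this, inv_inv] at hpf
  have h0 := (pairs_sub G hpf).1
  obtain ⟨k, hk⟩ := pow_unbounded_of_one_lt ((Fintype.card F : ℝ) / labs (C.y 0 - (t - polyY P0)⁻¹)) (one_lt_q (F := F))
  refine C.notin G H k 0 _ hpf ?_
  rw [div_lt_iff₀ h0] at hk; linarith

theorem CFr.not_rat {x : LaurentSeries F} {P0 : Polynomial F}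
    (hx : x = polyY P0 + (C.y 0)⁻¹) : ¬ IsRatL x := by
  intro h
  obtain ⟨A, B, hA, h⟩ := lin_of_isRatL h
  have hy0 := C.yne 0
  have h2 : polyY (A * P0 + B) * C.y 0 + polyY A = 0 := by
    rw [polyY_add, polyY_mul]
    rw [hx] at h
    have : polyY A * (C.y 0)⁻¹ * C.y 0 = polyY A := by field_simp
    linear_combination (C.y 0) * h - this
  have h3 := cf_irr C.P C.y C.hy C.hy1 _ 0 _ _ le_rfl h2
  rw [h3, polyY_zero, zero_mul, zero_add] at h2
  exact hA (polyY_inj h2)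

end cfpart

section limpart
variable {F : Type*} [Field F] [Fintype F] {φ s : LaurentSeries F}

theorem gold_of (hroot : φ ^ 2 = HahnSeries.single (-1 : ℤ) (1 : F) * φ + 1)
    (horder : φ.order = -1) : Gold φ (HahnSeries.single (-1 : ℤ) (1 : F) - φ) where
  add := by rw [polyY_X]; ring
  mul := by linear_combination -hroot
  lab := by
    rw [labs_of_ne, horder]
    · simp
    · rintro rfl; simp at horder

theorem tf_freq {Q : LaurentSeries F × LaurentSeries F → Prop}
    (h : ∀ ε > 0, ∃ p ∈ thetaPairs φ s, labs (p.1 - p.2) < ε ∧ Q p) :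
    ∃ᶠ p in thetaFilter φ s, Q p := by
  unfold thetaFilter
  have hb := ((nhds_basis_abs_sub_lt (0 : ℝ)).comap
    (fun p : LaurentSeries F × LaurentSeries F => labs (p.1 - p.2))).principal_inf (thetaPairs φ s)
  rw [hb.frequently_iff]
  intro ε hε
  obtain ⟨p, hp, h1, h2⟩ := h ε hε
  refine ⟨p, ⟨hp, ?_⟩, h2⟩
  simpa [abs_of_nonneg (labs_nonneg _)] using h1

theorem tf_ev {Q : LaurentSeries F × LaurentSeries F → Prop}
    (h : ∀ p ∈ thetaPairs φ s, labs (p.1 - p.2) < 1 → Q p) :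
    ∀ᶠ p in thetaFilter φ s, Q p := by
  unfold thetaFilter
  have hb := ((nhds_basis_abs_sub_lt (0 : ℝ)).comap
    (fun p : LaurentSeries F × LaurentSeries F => labs (p.1 - p.2))).principal_inf (thetaPairs φ s)
  rw [hb.eventually_iff]
  refine ⟨1, one_pos, ?_⟩
  rintro p ⟨hp, h2⟩
  exact h p hp (by simpa [abs_of_nonneg (labs_nonneg _)] using h2)

theorem rat_nonneg (x : LaurentSeries F) (p : LaurentSeries F × LaurentSeries F) :
    0 ≤ labs (x - p.1) / labs (p.1 - p.2) := div_nonneg (labs_nonneg _) (labs_nonneg _)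

theorem cap_le {x : LaurentSeries F} {ρ : ℝ}
    (h : ∀ ε > 0, ∃ p ∈ thetaPairs φ s, labs (p.1 - p.2) < ε ∧
      labs (x - p.1) / labs (p.1 - p.2) ≤ ρ) : capprox φ s x ≤ ρ := by
  unfold capprox
  exact liminf_le_of_frequently_le (tf_freq h)
    ⟨0, by simp only [eventually_map]; exact Eventually.of_forall fun p => rat_nonneg x p⟩

theorem le_cap {x : LaurentSeries F} {ρ ρ' : ℝ}
    (h : ∀ ε > 0, ∃ p ∈ thetaPairs φ s, labs (p.1 - p.2) < ε ∧
      labs (x - p.1) / labs (p.1 - p.2) ≤ ρ)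
    (h' : ∀ᶠ p in thetaFilter φ s, ρ' ≤ labs (x - p.1) / labs (p.1 - p.2)) :
    ρ' ≤ capprox φ s x := by
  unfold capprox
  exact le_liminf_of_le (IsCoboundedUnder.of_frequently_le (tf_freq h)) h'

theorem cap_discrete {x : LaurentSeries F} 
    (h : ∀ ε > 0, ∃ p ∈ thetaPairs φ s, labs (p.1 - p.2) < ε ∧
      labs (x - p.1) / labs (p.1 - p.2) ≤ (Fintype.card F : ℝ) ^ (-2 : ℤ)) :
    capprox φ s x = 0 ∨ ∃ n : ℕ, capprox φ s x = (Fintype.card F : ℝ) ^ (-(n : ℤ) - 2) := by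
  have q1 := one_lt_q (F := F)
  have c2 := cap_le h
  have c0 : 0 ≤ capprox φ s x := le_cap h (Eventually.of_forall fun p => rat_nonneg x p)
  rcases c0.eq_or_lt with c0 | c0
  · exact Or.inl c0.symm
  right
  obtain ⟨j, hj1, hj2⟩ := exists_mem_Ioc_zpow c0 q1
  have hev : ∀ᶠ p in thetaFilter φ s,
      (Fintype.card F : ℝ) ^ j < labs (x - p.1) / labs (p.1 - p.2) := 
    eventually_lt_of_lt_liminf hj1
      ⟨0, by simp only [eventually_map]; exact Eventually.of_forall fun p => rat_nonneg x p⟩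
  have hev2 : (Fintype.card F : ℝ) ^ (j + 1) ≤ capprox φ s x := by
    apply le_cap h
    filter_upwards [hev] with p hp
    have h0 : 0 < labs (x - p.1) / labs (p.1 - p.2) := lt_trans (by positivity) hp
    rw [← labs_div] at hp h0 ⊢
    obtain ⟨m, hm⟩ := labs_zpow_cases (ne_of_labs_pos h0)
    rw [hm] at hp ⊢
    rw [zpow_lt_zpow_iff_right₀ q1] at hp
    rw [zpow_le_zpow_iff_right₀ q1]
    omega
  have he := le_antisymm hj2 hev2
  rw [he, zpow_le_zpow_iff_right₀ q1] at c2
  refine ⟨(-(j + 1) - 2).toNat, ?_⟩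
  rw [he]; congr 1; omega

/-- irrational CF -/
theorem cf_exists {x : LaurentSeries F} (hx : ¬ IsRatL x) :
    ∃ (C : CFr F) (P0 : Polynomial F), x = polyY P0 + (C.y 0)⁻¹ := by
  have q1 := one_lt_q (F := F)
  have key : ∀ z : {z : LaurentSeries F // ¬ IsRatL z}, ∃ P : Polynomial F,
      ∃ w : {z : LaurentSeries F // ¬ IsRatL z}, z.1 = polyY P + (w.1)⁻¹ ∧ 1 < labs w.1 := by
    rintro ⟨z, hz⟩
    obtain ⟨P, hP⟩ := exists_int_part z
    have hne : z - polyY P ≠ 0 := by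
      intro h0
      apply hz
      refine isRatL_of_lin (A := 1) (B := -P) one_ne_zero ?_
      rw [polyY_one, polyY_neg]; linear_combination h0
    refine ⟨P, ⟨(z - polyY P)⁻¹, ?_⟩, ?_, ?_⟩
    · intro h
      obtain ⟨A, B, hA, h⟩ := lin_of_isRatL h
      apply hz
      have h2 : polyY A + polyY B * (z - polyY P) = 0 := by
        have : polyY A + polyY B * (z - polyY P) = 
          (polyY A * (z - polyY P)⁻¹ + polyY B) * (z - polyY P) := by field_simp
        rw [this, h, zero_mul]
      refine isRatL_of_lin (A := B) (B := A - B * P) ?_ ?_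
      · rintro rfl
        apply hA
        apply polyY_inj
        simpa [polyY_zero] using h2
      · rw [polyY_sub, polyY_mul]; linear_combination h2
    · simp
    · dsimp only
      rw [labs_inv]; exact (one_lt_inv₀ (labs_pos hne)).2 hP
  choose P w h1 h2 using key
  let Z : ℕ → {z : LaurentSeries F // ¬ IsRatL z} := fun n => Nat.rec ⟨x, hx⟩ (fun _ z => w z) n
  have hZ : ∀ n, Z (n + 1) = w (Z n) := fun n => rfl
  let D : ℕ → LaurentSeries F := fun n => Nat.rec 0 (fun n d => (polyY (P (Z (n + 1))) + d)⁻¹) n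
  refine ⟨⟨fun n => P (Z (n + 1)), fun n => (Z (n + 1)).1, D, ?_, ?_, rfl, fun n => rfl⟩,
    P (Z 0), ?_⟩
  · intro n; exact h1 (Z (n + 1))
  · intro n; exact h2 (Z n)
  · exact h1 (Z 0)

theorem CFr.gen_le (C : CFr F) (G : Gold φ s) (n : ℕ) :
    crr (C.y n) (C.δ n) φ s ≤ (Fintype.card F : ℝ) ^ (-2 : ℤ) := by
  have q1 := one_lt_q (F := F)
  have hy := C.hy1 n
  have hyq := q_le_of_one_lt hy
  unfold crr
  rw [G.dlab, labs_add_left (x := C.y n) ((C.δlt n).trans hy)]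
  have h1 : labs (C.y n - φ) ≤ labs (C.y n) := by
    refine (labs_sub_le _ _).trans ?_
    rw [G.lab]; simp [hyq]
  have h2 : labs (s + C.δ n) ≤ (Fintype.card F : ℝ)⁻¹ := by
    refine (labs_add_le _ _).trans ?_
    rw [G.slab]; simp [labs_lt_one_le (C.δlt n)]
  have h3 : labs (C.y n - φ) * labs (s + C.δ n) ≤ labs (C.y n) * (Fintype.card F : ℝ)⁻¹ :=
    mul_le_mul h1 h2 (labs_nonneg _) (labs_nonneg _)
  rw [div_le_iff₀ (by positivity)]
  refine h3.trans (le_of_eq ?_)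
  rw [zpow_neg]
  field_simp

theorem CFr.not_ev (C : CFr F) (G : Gold φ s) {x : LaurentSeries F} {P0 : Polynomial F}
    (hx : x = polyY P0 + (C.y 0)⁻¹) (hth : x ∉ theta φ s) (N : ℕ) :
    ∃ n ≥ N, C.P n ≠ Polynomial.X := by
  by_contra hcon
  push Not at hcon
  have q1 := one_lt_q (F := F)
  have hstep : ∀ n ≥ N, labs (C.y n - φ) ≤ labs (C.y (n + 1) - φ) * (Fintype.card F : ℝ)⁻¹ := by
    intro n hn
    rw [C.hy n, hcon n hn]
    nth_rewrite 1 [G.phi_eq]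
    rw [labs_pinv (C.yne _) G.ne, G.lab, div_eq_mul_inv]
    apply mul_le_mul_of_nonneg_left _ (labs_nonneg _)
    rw [mul_inv]
    have : (labs (C.y (n + 1)))⁻¹ ≤ 1 := inv_le_one_of_one_le₀ (C.hy1 _).le
    have h0 : 0 ≤ (Fintype.card F : ℝ)⁻¹ := by positivity
    nlinarith
  have hb : ∀ n ≥ N, labs (C.y n - φ) ≤ 1 := by
    intro n hn
    rw [C.hy n, hcon n hn]
    nth_rewrite 1 [G.phi_eq]
    rw [show polyY Polynomial.X + (C.y (n + 1))⁻¹ - (polyY Polynomial.X + φ⁻¹) = (C.y (n+1))⁻¹ - φ⁻¹ by ring]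
    refine (labs_sub_le _ _).trans (max_le (C.yinv _).le ?_)
    rw [labs_inv, G.lab]; exact inv_le_one_of_one_le₀ q1.le
  have hk : ∀ k : ℕ, ∀ n ≥ N, labs (C.y n - φ) ≤ (Fintype.card F : ℝ) ^ (-(k : ℤ)) := by
    intro k
    induction k with
    | zero => simpa using hb
    | succ k ih =>
      intro n hn
      refine (hstep n hn).trans ?_
      have := ih (n + 1) (by omega)
      rw [show (-((k + 1 : ℕ) : ℤ)) = -(k : ℤ) + (-1) by push_cast; ring, zpow_add₀ (by positivity),
        zpow_neg_one]
      exact mul_le_mul_of_nonneg_right this (by positivity)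
  have hφ : C.y N = φ := by
    have := labs_small_eq_zero (fun k => hk k N le_rfl)
    exact sub_eq_zero.1 this
  have hback : ∀ k ≤ N, ∃ t, (C.y (N - k), t) ∈ thetaPairs φ s := by
    intro k
    induction k with
    | zero => intro _; exact ⟨s, by rw [Nat.sub_zero, hφ]; exact pairs_self⟩
    | succ k ih =>
      intro hk
      obtain ⟨t, ht⟩ := ih (by omega)
      have := pairs_bwd G ht (C.P (N - (k + 1)))
      rw [show N - k = N - (k + 1) + 1 by omega, ← C.hy] at this
      exact ⟨_, this⟩
  obtain ⟨t, ht⟩ := hback N le_rfl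
  rw [Nat.sub_self] at ht
  exact hth ⟨_, pairs_bwd G ht P0, hx.symm⟩

theorem sub_dir (G : Gold φ s) {x : LaurentSeries F} (hx : ¬ IsRatL x) (hth : x ∉ theta φ s) :
    capprox φ s x = 0 ∨ ∃ n : ℕ, capprox φ s x = (Fintype.card F : ℝ) ^ (-(n : ℤ) - 2) := by
  obtain ⟨C, P0, h⟩ := cf_exists hx
  apply cap_discrete
  apply C.freq G h
  intro N
  obtain ⟨n, hn, hP⟩ := C.not_ev G h hth N
  exact ⟨n, hn, hP, C.gen_le G _⟩

end limpart

section conv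
variable {F : Type*} [Field F] [Fintype F]

noncomputable def cfT (P : ℕ → Polynomial F) : ℕ → ℕ → LaurentSeries F
  | 0, _ => 0
  | N + 1, n => (polyY (P n) + cfT P N (n + 1))⁻¹

theorem cfT_succ (P : ℕ → Polynomial F) (N n : ℕ) :
    cfT P (N + 1) n = (polyY (P n) + cfT P N (n + 1))⁻¹ := rfl

theorem labs_inv_sub {a b : LaurentSeries F} (ha : 1 < labs a) (hb : 1 < labs b) :
    labs (a⁻¹ - b⁻¹) ≤ labs (a - b) * (Fintype.card F : ℝ)⁻¹ := by
  have q1 := one_lt_q (F := F)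
  have h := labs_pinv (p := (0 : LaurentSeries F)) (a := a) (b := b)
    (ne_of_labs_pos (by linarith)) (ne_of_labs_pos (by linarith))
  rw [zero_add, zero_add] at h
  rw [h, div_eq_mul_inv]
  apply mul_le_mul_of_nonneg_left _ (labs_nonneg _)
  apply inv_anti₀ (by positivity)
  have := q_le_of_one_lt ha
  nlinarith

theorem cfT_lt (P : ℕ → Polynomial F) (hP : ∀ n, 1 < labs (polyY (P n))) :
    ∀ N n, labs (cfT P N n) < 1 := by
  intro N
  induction N with
  | zero => intro n; simp [cfT, labs_zero]
  | succ N ih =>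
    intro n
    rw [cfT, labs_inv, labs_add_left ((ih _).trans (hP n))]
    exact inv_lt_one_of_one_lt₀ (hP n)

theorem cf_pl {P : Polynomial F} {t : LaurentSeries F} (hP : 1 < labs (polyY P))
    (ht : labs t < 1) : 1 < labs (polyY P + t) := by
  rwa [labs_add_left (ht.trans hP)]

theorem cfT_step (P : ℕ → Polynomial F) (hP : ∀ n, 1 < labs (polyY (P n))) :
    ∀ N n, labs (cfT P (N + 1) n - cfT P N n) ≤ (Fintype.card F : ℝ) ^ (-((N : ℤ) + 1)) := by
  intro N
  have q1 := one_lt_q (F := F)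
  induction N with
  | zero =>
    intro n
    have := labs_lt_one_le (cfT_lt P hP 1 n)
    simpa [cfT] using this
  | succ N ih =>
    intro n
    rw [cfT_succ P (N + 1) n, cfT_succ P N n]
    refine (labs_inv_sub (cf_pl (hP n) (cfT_lt P hP _ _)) (cf_pl (hP n) (cfT_lt P hP _ _))).trans ?_
    rw [add_sub_add_left_eq_sub]
    have := mul_le_mul_of_nonneg_right (ih (n + 1)) (inv_nonneg.2 (zero_le_one.trans q1.le))
    refine this.trans (le_of_eq ?_)
    rw [← zpow_neg_one, ← zpow_add₀ (by positivity)]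
    congr 1

theorem cfT_coeff (P : ℕ → Polynomial F) (hP : ∀ n, 1 < labs (polyY (P n))) (n N : ℕ) (k : ℤ)
    (hk : k ≤ N) : ∀ M : ℕ, (cfT P (N + M) n).coeff k = (cfT P N n).coeff k := by
  intro M
  induction M with
  | zero => rfl
  | succ M ih =>
    have h := (labs_le_iff _).1 (cfT_step P hP (N + M) n) k (by push_cast; omega)
    rw [HahnSeries.coeff_sub, sub_eq_zero] at h
    rw [← ih, ← h, add_assoc]

theorem cf_lim (P : ℕ → Polynomial F) (hP : ∀ n, 1 < labs (polyY (P n))) (n : ℕ) :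
    ∃ t : LaurentSeries F, ∀ N : ℕ,
      labs (t - cfT P N n) ≤ (Fintype.card F : ℝ) ^ (-((N : ℤ) + 1)) := by
  have q1 := one_lt_q (F := F)
  refine ⟨HahnSeries.ofSuppBddBelow (fun k : ℤ => (cfT P k.toNat n).coeff k) ?_, ?_⟩
  · refine ⟨0, ?_⟩
    intro k hk
    by_contra h
    refine hk ?_
    have : k.toNat = 0 := by omega
    simp [this, cfT]
  · intro N
    rw [labs_le_iff]
    intro k hk
    rw [HahnSeries.coeff_sub, sub_eq_zero]
    change (cfT P k.toNat n).coeff k = (cfT P N n).coeff k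
    have h := cfT_coeff P hP n k.toNat k (by omega)
    rcases lt_or_ge k 0 with h0 | h0
    · have h3 := (labs_le_iff (x := cfT P N n) 0).1 (by simpa using (cfT_lt P hP N n).le) k h0
      rw [h3]
      have : k.toNat = 0 := by omega
      simp [this, cfT]
    · have := h (N - k.toNat)
      rw [← this]
      congr 2; omega

theorem cf_of_seq (P : ℕ → Polynomial F) (hP : ∀ n, 1 < labs (polyY (P n))) :
    ∃ C : CFr F, C.P = P := by
  have q1 := one_lt_q (F := F)
  choose t ht using cf_lim P hP
  have t1 : ∀ n, labs (t n) < 1 := by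
    intro n
    have := ht n 0
    simp [cfT] at this
    exact this.trans_lt (inv_lt_one_of_one_lt₀ q1)
  have key : ∀ n, t n = (polyY (P n) + t (n + 1))⁻¹ := by
    intro n
    rw [← sub_eq_zero]
    apply labs_small_eq_zero
    intro N
    have e : t n - (polyY (P n) + t (n + 1))⁻¹ = (t n - cfT P (N + 1) n) -
      ((polyY (P n) + t (n + 1))⁻¹ - (polyY (P n) + cfT P N (n + 1))⁻¹) := by
      rw [cfT]; ring
    rw [e]
    refine (labs_sub_le _ _).trans (max_le ?_ ?_)
    · refine (ht n (N + 1)).trans ?_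
      rw [zpow_le_zpow_iff_right₀ q1]; push_cast; omega
    · refine (labs_inv_sub (cf_pl (hP n) (t1 _)) (cf_pl (hP n) (cfT_lt P hP _ _))).trans ?_
      rw [add_sub_add_left_eq_sub]
      have h1 := mul_le_mul_of_nonneg_left (inv_le_one_of_one_le₀ q1.le)
        (labs_nonneg (t (n + 1) - cfT P N (n + 1)))
      refine h1.trans ?_
      rw [mul_one]
      refine (ht (n + 1) N).trans ?_
      rw [zpow_le_zpow_iff_right₀ q1]; omega
  let D : ℕ → LaurentSeries F := fun n => Nat.rec 0 (fun n d => (polyY (P n) + d)⁻¹) n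
  refine ⟨⟨P, fun n => (t n)⁻¹, D, ?_, ?_, rfl, fun n => rfl⟩, rfl⟩
  · intro n
    rw [key n, inv_inv, inv_inv]
  · intro n
    rw [key n, inv_inv]
    exact cf_pl (hP n) (t1 _)

end conv

section sup
variable {F : Type*} [Field F] [Fintype F] {φ s : LaurentSeries F}

theorem labX : labs (polyY (Polynomial.X : Polynomial F)) = (Fintype.card F : ℝ) := by
  rw [labs_polyY Polynomial.X_ne_zero]; simp

theorem labX2 : labs (polyY (Polynomial.X ^ 2 : Polynomial F)) = (Fintype.card F : ℝ) ^ 2 := by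
  rw [polyY_pow, pow_two, pow_two, labs_mul, labX]

theorem labXC (e : F) : labs (polyY (Polynomial.X + Polynomial.C e : Polynomial F))
    = (Fintype.card F : ℝ) := by
  have q1 := one_lt_q (F := F)
  rw [polyY_add, labs_add_left, labX]
  rw [labX]; exact (labs_C_le e).trans_lt q1

/-- `(1-u) Y + small` -/
theorem lab_lin {u : F} (hu : u ≠ 1) {t : LaurentSeries F} (ht : labs t ≤ 1) :
    labs ((1 - polyY (Polynomial.C u)) * polyY Polynomial.X + t) = (Fintype.card F : ℝ) := by
  have q1 := one_lt_q (F := F)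
  have h : labs ((1 - polyY (Polynomial.C u)) * polyY (Polynomial.X : Polynomial F))
      = (Fintype.card F : ℝ) := by
    rw [labs_mul, labX, ← polyY_one, ← polyY_sub, ← Polynomial.C_1, ← Polynomial.C_sub, labs_C,
      one_mul]
    exact sub_ne_zero.2 hu.symm
  rw [labs_add_left, h]
  rw [h]; linarith

theorem max3 {a b c : LaurentSeries F} (ha : labs a ≤ 1) (hb : labs b ≤ 1) (hc : labs c ≤ 1) :
    labs (a + b + c) ≤ 1 :=
  (labs_add_le _ _).trans (max_le ((labs_add_le _ _).trans (max_le ha hb)) hc)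

theorem Gold.invlab (G : Gold φ s) : labs φ⁻¹ ≤ 1 := by
  rw [labs_inv, G.lab]; exact inv_le_one_of_one_le₀ one_lt_q.le

theorem cu_le (u : F) {t : LaurentSeries F} (ht : labs t ≤ 1) :
    labs (-(polyY (Polynomial.C u) * t)) ≤ 1 := by
  rw [labs_neg, labs_mul]
  exact mul_le_one₀ (labs_C_le u) (labs_nonneg _) ht

variable (C : CFr F)

theorem CFr.sd_eq (G : Gold φ s) (n : ℕ) (u : F) :
    labs (polyY (Polynomial.C u) * s + C.δ (n + 1)) =
      labs (φ - polyY (Polynomial.C u) * (polyY (C.P n) + C.δ n)) /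
        ((Fintype.card F : ℝ) * labs (C.y n)) := by
  rw [← C.pdlab, ← G.lab, ← labs_mul, ← labs_div, C.hδ, G.s_eq]
  have h1 := G.ne
  have h2 := C.pd n
  congr 1
  field_simp
  ring

theorem CFr.sd_ne (G : Gold φ s) (n : ℕ) {u : F} (hu0 : u ≠ 0) (hu : u ≠ 1)
    (hP : C.P n = Polynomial.X ^ 2 ∨ ∃ e, C.P n = Polynomial.X + Polynomial.C e) :
    labs (polyY (Polynomial.C u) * s + C.δ (n + 1)) = (Fintype.card F : ℝ)⁻¹ := by
  have q1 := one_lt_q (F := F)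
  rw [C.sd_eq G]
  rcases hP with hP | ⟨e, hP⟩
  · have hy : labs (C.y n) = (Fintype.card F : ℝ) ^ 2 := by rw [← C.labP, hP, labX2]
    rw [labs_sub_right, labs_mul, labs_C hu0, C.pdlab, hy]
    · field_simp
    · rw [labs_mul, labs_C hu0, C.pdlab, hy, G.lab]; nlinarith
  · have hy : labs (C.y n) = (Fintype.card F : ℝ) := by rw [← C.labP, hP, labXC]
    have e1 : φ - polyY (Polynomial.C u) * (polyY (C.P n) + C.δ n) =
      (1 - polyY (Polynomial.C u)) * polyY Polynomial.X +
      (φ⁻¹ + -(polyY (Polynomial.C u) * polyY (Polynomial.C e))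
        + -(polyY (Polynomial.C u) * C.δ n)) := by
      rw [hP, polyY_add]
      linear_combination G.phi_eq
    rw [e1, lab_lin hu, hy]
    · field_simp
    · exact max3 G.invlab (cu_le u (labs_C_le e)) (cu_le u (C.δlt n).le)

theorem one_C : polyY (Polynomial.C (1 : F)) = 1 := by rw [Polynomial.C_1, polyY_one]

theorem CFr.sd0 (G : Gold φ s) : labs (s + C.δ 0) = (Fintype.card F : ℝ)⁻¹ := by
  rw [C.hδ0, add_zero, G.slab]

theorem CFr.sd_sq (G : Gold φ s) (n : ℕ) (hP : C.P n = Polynomial.X ^ 2) :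
    labs (s + C.δ (n + 1)) = (Fintype.card F : ℝ)⁻¹ := by
  have q1 := one_lt_q (F := F)
  have h := C.sd_eq G n 1
  rw [one_C, one_mul, one_mul] at h
  have hy : labs (C.y n) = (Fintype.card F : ℝ) ^ 2 := by rw [← C.labP, hP, labX2]
  rw [h, labs_sub_right, C.pdlab, hy]
  · field_simp
  · rw [C.pdlab, hy, G.lab]; nlinarith

theorem CFr.sd_lin (G : Gold φ s) (n : ℕ) (e : F)
    (hP : C.P n = Polynomial.X + Polynomial.C e) :
    labs (s + C.δ (n + 1)) = labs (polyY (Polynomial.C e) + (s + C.δ n)) /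
      (Fintype.card F : ℝ) ^ 2 := by
  have h := C.sd_eq G n 1
  rw [one_C, one_mul, one_mul] at h
  have hy : labs (C.y n) = (Fintype.card F : ℝ) := by rw [← C.labP, hP, labXC]
  rw [h, hy, pow_two]
  congr 1
  rw [← labs_neg]
  congr 1
  rw [hP, polyY_add, G.s_eq]
  linear_combination -G.phi_eq

theorem CFr.sd_le (G : Gold φ s) (n : ℕ) : labs (s + C.δ n) < 1 :=
  (labs_add_le _ _).trans_lt (max_lt G.slt (C.δlt n))

theorem CFr.sd_X (G : Gold φ s) (n : ℕ) (hP : C.P n = Polynomial.X) :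
    labs (s + C.δ (n + 1)) = labs (s + C.δ n) / (Fintype.card F : ℝ) ^ 2 := by
  rw [C.sd_lin G n 0 (by simp [hP])]
  simp [polyY_zero]

theorem CFr.sd_X1 (G : Gold φ s) (n : ℕ) (hP : C.P n = Polynomial.X + Polynomial.C 1) :
    labs (s + C.δ (n + 1)) = 1 / (Fintype.card F : ℝ) ^ 2 := by
  rw [C.sd_lin G n 1 hP, one_C, labs_add_left, labs_one]
  rw [labs_one]; exact C.sd_le G n

theorem CFr.sd_run (G : Gold φ s) (n : ℕ) : ∀ j : ℕ, (∀ i < j, C.P (n + i) = Polynomial.X) →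
    labs (s + C.δ (n + j)) = labs (s + C.δ n) / (Fintype.card F : ℝ) ^ (2 * j) := by
  intro j
  induction j with
  | zero => intro _; simp
  | succ j ih =>
    intro h
    rw [← add_assoc, C.sd_X G _ (h j (by omega)), ih (fun i hi => h i (by omega)), div_div,
      ← pow_add]
    rfl

theorem CFr.crr_X (G : Gold φ s) (n : ℕ) (hP : C.P n = Polynomial.X) :
    crr (C.y n) (C.δ n) φ s = crr (C.y (n + 1)) (C.δ (n + 1)) φ s := by
  rw [← C.step n G.ne G.sne, hP, ← G.phi_eq]
  congr 1
  have : s⁻¹ = -φ := by rw [G.s_eq]; simp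
  rw [this, ← G.add]; ring

theorem CFr.crr_run (G : Gold φ s) (n : ℕ) : ∀ j : ℕ, (∀ i < j, C.P (n + i) = Polynomial.X) →
    crr (C.y n) (C.δ n) φ s = crr (C.y (n + j)) (C.δ (n + j)) φ s := by
  intro j
  induction j with
  | zero => intro _; simp
  | succ j ih =>
    intro h
    rw [ih (fun i hi => h i (by omega)), C.crr_X G _ (h j (by omega))]
    rfl

theorem CFr.ydlab (n : ℕ) : labs (C.y n + C.δ n) = labs (C.y n) :=
  labs_add_left ((C.δlt n).trans (C.hy1 n))

theorem CFr.crr_sq (G : Gold φ s) (n : ℕ) (hP : C.P n = Polynomial.X ^ 2) :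
    crr (C.y n) (C.δ n) φ s = labs (s + C.δ n) / (Fintype.card F : ℝ) := by
  have q1 := one_lt_q (F := F)
  have hy : labs (C.y n) = (Fintype.card F : ℝ) ^ 2 := by rw [← C.labP, hP, labX2]
  unfold crr
  rw [labs_sub_left, C.ydlab, G.dlab, hy]
  · field_simp
  · rw [hy, G.lab]; nlinarith

theorem CFr.crr_X1 (G : Gold φ s) (n : ℕ) (hP : C.P n = Polynomial.X + Polynomial.C 1) :
    crr (C.y n) (C.δ n) φ s = labs (s + C.δ n) / (Fintype.card F : ℝ) ^ 2 := by
  have q1 := one_lt_q (F := F)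
  have hy : labs (C.y n) = (Fintype.card F : ℝ) := by rw [← C.labP, hP, labXC]
  have h1 : C.y n - φ = 1 + ((C.y (n + 1))⁻¹ - φ⁻¹) := by
    rw [C.hy n, hP, polyY_add, one_C]
    linear_combination -G.phi_eq
  have h2 : labs ((C.y (n + 1))⁻¹ - φ⁻¹) < 1 := by
    refine (labs_sub_le _ _).trans_lt (max_lt (C.yinv _) ?_)
    rw [labs_inv, G.lab]; exact inv_lt_one_of_one_lt₀ q1
  unfold crr
  rw [C.ydlab, G.dlab, hy, h1, labs_add_left (by rwa [labs_one]), labs_one, one_mul, pow_two]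

/-- the numerator `y - w` -/
theorem CFr.yw (G : Gold φ s) (n : ℕ) (e u b : F)
    (hP : C.P n = Polynomial.X + Polynomial.C e) :
    C.y n - (polyY (Polynomial.C u) * φ + polyY (Polynomial.C b)) =
      (1 - polyY (Polynomial.C u)) * polyY Polynomial.X +
      (polyY (Polynomial.C (e - b)) + (C.y (n + 1))⁻¹ + -(polyY (Polynomial.C u) * φ⁻¹)) := by
  rw [C.hy n, hP, polyY_add, Polynomial.C_sub, polyY_sub]
  linear_combination (-polyY (Polynomial.C u)) * G.phi_eq

theorem Gold.wlab (G : Gold φ s) {u : F} (hu : u ≠ 0) (b : F) :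
    labs (polyY (Polynomial.C u) * φ + polyY (Polynomial.C b)) = (Fintype.card F : ℝ) := by
  have q1 := one_lt_q (F := F)
  rw [labs_add_left] <;> rw [labs_mul, labs_C hu, one_mul, G.lab]
  exact (labs_C_le b).trans_lt q1

theorem CFr.ywlab (G : Gold φ s) (n : ℕ) {u b : F} (hu : u ≠ 0)
    (hP : C.P n = Polynomial.X ^ 2 ∨ ((∃ e, C.P n = Polynomial.X + Polynomial.C e) ∧ u ≠ 1)) :
    labs (C.y n - (polyY (Polynomial.C u) * φ + polyY (Polynomial.C b))) = labs (C.y n) := by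
  have q1 := one_lt_q (F := F)
  rcases hP with hP | ⟨⟨e, hP⟩, hu1⟩
  · have hy : labs (C.y n) = (Fintype.card F : ℝ) ^ 2 := by rw [← C.labP, hP, labX2]
    rw [labs_sub_left]
    rw [hy, G.wlab hu]; nlinarith
  · have hy : labs (C.y n) = (Fintype.card F : ℝ) := by rw [← C.labP, hP, labXC]
    rw [C.yw G n e u b hP, hy, lab_lin hu1]
    exact max3 (labs_C_le _) (C.yinv _).le (cu_le u G.invlab)

theorem Gold.wt (G : Gold φ s) {u : F} (hu : u ≠ 0) (b : F) :
    labs ((polyY (Polynomial.C u) * φ + polyY (Polynomial.C b)) -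
      (polyY (Polynomial.C u) * s + polyY (Polynomial.C b))) = (Fintype.card F : ℝ) := by
  rw [add_sub_add_right_eq_sub, ← mul_sub, labs_mul, labs_C hu, one_mul, G.dlab]

theorem CFr.ub_lower (G : Gold φ s) (ρ : ℝ) (hρ : ρ ≤ ((Fintype.card F : ℝ) ^ 2)⁻¹)
    (hP : ∀ n, C.P n = Polynomial.X ^ 2 ∨ ∃ e, C.P n = Polynomial.X + Polynomial.C e)
    (h3 : ∀ n, ∀ b : F, b ≠ 0 → C.P n = Polynomial.X + Polynomial.C b →
      ρ ≤ ((Fintype.card F : ℝ) ^ 3)⁻¹ ∧ C.P (n + 1) = Polynomial.X ^ 2)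
    (hc : ∀ n, ρ ≤ crr (C.y (n + 1)) (C.δ (n + 1)) φ s) (n : ℕ) (u b : F) (hu : u ≠ 0) :
    ρ ≤ crr (C.y (n + 1)) (C.δ (n + 1))
      (polyY (Polynomial.C u) * φ + polyY (Polynomial.C b))
      (polyY (Polynomial.C u) * s + polyY (Polynomial.C b)) := by
  have q1 := one_lt_q (F := F)
  have hy0 := labs_pos (C.yne (n + 1))
  have hqq : ((Fintype.card F : ℝ) ^ 2)⁻¹ ≤ (Fintype.card F : ℝ)⁻¹ := by
    apply inv_anti₀ (by positivity); nlinarith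
  by_cases hb : b = 0
  · subst hb
    by_cases hu1 : u = 1
    · subst hu1
      simpa [polyY_one, polyY_zero] using hc n
    · have h1 := C.ywlab G (n + 1) (u := u) (b := 0) hu
        ((hP (n + 1)).imp id (fun h => ⟨h, hu1⟩))
      have h2 := C.sd_ne G n hu hu1 (hP n)
      unfold crr
      rw [G.wt hu, C.ydlab, h1]
      rw [Polynomial.C_0, polyY_zero, add_zero, h2]
      refine hρ.trans (le_of_eq ?_)
      field_simp
  · have ht : labs (polyY (Polynomial.C u) * s + polyY (Polynomial.C b) + C.δ (n + 1)) = 1 := by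
      have e1 : polyY (Polynomial.C u) * s + polyY (Polynomial.C b) + C.δ (n + 1) =
        polyY (Polynomial.C b) + (polyY (Polynomial.C u) * s + C.δ (n + 1)) := by ring
      rw [e1, labs_add_left] <;> rw [labs_C hb]
      refine (labs_add_le _ _).trans_lt (max_lt ?_ (C.δlt _))
      rw [labs_mul, labs_C hu, one_mul]; exact G.slt
    unfold crr
    rw [G.wt hu, C.ydlab, ht, mul_one]
    by_cases hA : C.P (n + 1) = Polynomial.X ^ 2 ∨
      ((∃ e, C.P (n + 1) = Polynomial.X + Polynomial.C e) ∧ u ≠ 1)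
    · rw [C.ywlab G (n + 1) hu hA]
      refine (hρ.trans hqq).trans (le_of_eq ?_)
      field_simp
    · push Not at hA
      obtain ⟨e, he⟩ := (hP (n + 1)).resolve_left hA.1
      have hu1 := hA.2 ⟨e, he⟩
      subst hu1
      have hy : labs (C.y (n + 1)) = (Fintype.card F : ℝ) := by rw [← C.labP, he, labXC]
      rw [C.yw G (n + 1) e 1 b he, hy, one_C, sub_self, zero_mul, zero_add, one_mul]
      have hp1 : labs φ⁻¹ < 1 := by
        rw [labs_inv, G.lab]; exact inv_lt_one_of_one_lt₀ q1
      by_cases heb : e = b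
      · subst heb
        obtain ⟨h4, h5⟩ := h3 (n + 1) e hb he
        have hy2 : labs (C.y (n + 1 + 1)) = (Fintype.card F : ℝ) ^ 2 := by
          rw [← C.labP, h5, labX2]
        rw [sub_self, Polynomial.C_0, polyY_zero, zero_add, ← sub_eq_add_neg, labs_sub_right,
          labs_inv, G.lab]
        · refine h4.trans (le_of_eq ?_)
          field_simp
        · rw [labs_inv, labs_inv, G.lab, hy2]
          apply inv_strictAnti₀ (by positivity); nlinarith
      · have h6 : labs (polyY (Polynomial.C (e - b))) = 1 := labs_C (sub_ne_zero.2 heb)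
        rw [add_assoc, labs_add_left, h6]
        · refine hρ.trans (le_of_eq ?_)
          field_simp
        · rw [h6]
          refine (labs_add_le _ _).trans_lt (max_lt (C.yinv _) ?_)
          rwa [labs_neg]

theorem X2_ne : (Polynomial.X ^ 2 : Polynomial F) ≠ Polynomial.X := by
  intro h
  have := congrArg Polynomial.natDegree h
  simp at this

theorem CFr.sq_lt (n : ℕ) (hP : C.P n = Polynomial.X ^ 2) :
    (Fintype.card F : ℝ) < labs (C.y n) := by
  have q1 := one_lt_q (F := F)
  rw [← C.labP, hP, labX2]; nlinarith

theorem CFr.attain (G : Gold φ s) (ρ : ℝ) (hρ : ρ ≤ ((Fintype.card F : ℝ) ^ 2)⁻¹)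
    (hP : ∀ n, C.P n = Polynomial.X ^ 2 ∨ ∃ e, C.P n = Polynomial.X + Polynomial.C e)
    (h3 : ∀ n, ∀ b : F, b ≠ 0 → C.P n = Polynomial.X + Polynomial.C b →
      ρ ≤ ((Fintype.card F : ℝ) ^ 3)⁻¹ ∧ C.P (n + 1) = Polynomial.X ^ 2)
    (hc : ∀ n, ρ ≤ crr (C.y (n + 1)) (C.δ (n + 1)) φ s)
    (hf : ∀ N, ∃ n ≥ N, C.P n = Polynomial.X ^ 2 ∧
      crr (C.y (n + 1)) (C.δ (n + 1)) φ s ≤ ρ) : ρ ∈ quadSpectrum φ s := by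
  have q1 := one_lt_q (F := F)
  have hx : (C.y 0)⁻¹ = polyY 0 + (C.y 0)⁻¹ := by rw [polyY_zero, zero_add]
  have hfr := C.freq G hx ρ (fun N => by
    obtain ⟨n, hn, h1, h2⟩ := hf N
    exact ⟨n, hn, by rw [h1]; exact X2_ne, h2⟩)
  refine ⟨(C.y 0)⁻¹, C.not_rat hx, C.not_theta G hx (fun N => ?_), ?_⟩
  · obtain ⟨n, hn, h1, h2⟩ := hf N
    exact ⟨n, hn, C.sq_lt n h1⟩
  · refine le_antisymm (le_cap hfr (tf_ev (C.lower_ratio G hx ρ ?_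
      (C.ub_lower G ρ hρ hP h3 hc)))) (cap_le hfr)
    refine hρ.trans ?_
    apply inv_anti₀ (by positivity); nlinarith

theorem spec_even (G : Gold φ s) (k : ℕ) :
    ((Fintype.card F : ℝ) ^ (2 * k + 2))⁻¹ ∈ quadSpectrum φ s := by
  have q1 := one_lt_q (F := F)
  obtain ⟨C, hC⟩ := cf_of_seq (F := F)
    (fun n => if n % (k + 1) = 0 then Polynomial.X ^ 2 else Polynomial.X) (by
      intro n
      split_ifs
      · rw [labX2]; nlinarith
      · rw [labX]; exact q1)
  have hsq : ∀ a, C.P ((k + 1) * a) = Polynomial.X ^ 2 := by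
    intro a; rw [hC]; simp
  have hX : ∀ a i, i < k → C.P ((k + 1) * a + 1 + i) = Polynomial.X := by
    intro a i hi; rw [hC]
    have : ((k + 1) * a + 1 + i) % (k + 1) ≠ 0 := by
      rw [add_assoc, Nat.mul_add_mod, Nat.mod_eq_of_lt] <;> omega
    simp only [if_neg this]
  have key : ∀ n, crr (C.y (n + 1)) (C.δ (n + 1)) φ s = ((Fintype.card F : ℝ) ^ (2 * k + 2))⁻¹ := by
    intro n
    obtain ⟨a, i, hi, rfl⟩ : ∃ a i, i ≤ k ∧ n = (k + 1) * a + i :=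
      ⟨n / (k + 1), n % (k + 1), by exact Nat.lt_succ_iff.1 (Nat.mod_lt n (Nat.succ_pos k)),
        (Nat.div_add_mod n (k + 1)).symm⟩
    have e1 : (k + 1) * a + i + 1 + (k - i) = (k + 1) * (a + 1) := by
      rw [mul_add]; omega
    have e2 : (k + 1) * a + 1 + k = (k + 1) * (a + 1) := by ring
    rw [C.crr_run G ((k + 1) * a + i + 1) (k - i) ?_, e1, C.crr_sq G _ (hsq _), ← e2,
      C.sd_run G _ k (hX a), C.sd_sq G _ (hsq a)]
    · field_simp
      ring
    · intro j hj
      have := hX a (i + j) (by omega)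
      rw [← this]; congr 1; ring
  refine C.attain G _ ?_ ?_ ?_ (fun n => (key n).ge) ?_
  · apply inv_anti₀ (by positivity)
    exact pow_le_pow_right₀ q1.le (by omega)
  · intro n
    rw [hC]
    dsimp only
    split_ifs
    · exact Or.inl rfl
    · exact Or.inr ⟨0, by simp⟩
  · intro n b hb h
    exfalso
    rw [hC] at h
    dsimp only at h
    split_ifs at h
    · have := congrArg Polynomial.natDegree h
      simp at this
    · apply hb; simpa using h
  · intro N
    exact ⟨(k + 1) * N, by nlinarith, hsq N, (key _).le⟩

theorem spec_odd (G : Gold φ s) (k : ℕ) :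
    ((Fintype.card F : ℝ) ^ (2 * k + 3))⁻¹ ∈ quadSpectrum φ s := by
  have q1 := one_lt_q (F := F)
  obtain ⟨C, hC⟩ := cf_of_seq (F := F)
    (fun n => if n % (k + 2) = 0 then Polynomial.X ^ 2 else
      if n % (k + 2) = k + 1 then Polynomial.X + Polynomial.C 1 else Polynomial.X) (by
      intro n
      split_ifs
      · rw [labX2]; nlinarith
      · rw [labXC]; exact q1
      · rw [labX]; exact q1)
  have hsq : ∀ a, C.P ((k + 2) * a) = Polynomial.X ^ 2 := by
    intro a; rw [hC]; simp
  have hmod : ∀ a i, i ≤ k → ((k + 2) * a + 1 + i) % (k + 2) = i + 1 := by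
    intro a i hi
    rw [add_assoc, Nat.mul_add_mod, Nat.mod_eq_of_lt] <;> omega
  have hX : ∀ a i, i < k → C.P ((k + 2) * a + 1 + i) = Polynomial.X := by
    intro a i hi; rw [hC]
    have := hmod a i hi.le
    simp only [this]
    rw [if_neg (by omega), if_neg (by omega)]
  have hX1 : ∀ a, C.P ((k + 2) * a + 1 + k) = Polynomial.X + Polynomial.C 1 := by
    intro a; rw [hC]
    have := hmod a k le_rfl
    simp only [this]
    rw [if_neg (by omega), if_pos trivial]
  have key : ∀ a i, i ≤ k → crr (C.y ((k + 2) * a + i + 1)) (C.δ ((k + 2) * a + i + 1)) φ s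
      = ((Fintype.card F : ℝ) ^ (2 * k + 3))⁻¹ := by
    intro a i hi
    have e1 : (k + 2) * a + i + 1 + (k - i) = (k + 2) * a + 1 + k := by omega
    rw [C.crr_run G ((k + 2) * a + i + 1) (k - i) ?_, e1, C.crr_X1 G _ (hX1 _), 
      C.sd_run G _ k (hX a), C.sd_sq G _ (hsq a)]
    · field_simp
      ring
    · intro j hj
      have := hX a (i + j) (by omega)
      rw [← this]; congr 1; ring
  have key2 : ∀ a, crr (C.y ((k + 2) * a + (k + 1) + 1)) (C.δ ((k + 2) * a + (k + 1) + 1)) φ s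
      = ((Fintype.card F : ℝ) ^ 3)⁻¹ := by
    intro a
    have e1 : (k + 2) * a + (k + 1) + 1 = (k + 2) * (a + 1) := by ring
    have e2 : (k + 2) * (a + 1) = ((k + 2) * a + 1 + k) + 1 := by ring
    rw [e1, C.crr_sq G _ (hsq _), e2, C.sd_X1 G _ (hX1 a)]
    field_simp
  have hle : ((Fintype.card F : ℝ) ^ (2 * k + 3))⁻¹ ≤ ((Fintype.card F : ℝ) ^ 3)⁻¹ := by
    apply inv_anti₀ (by positivity)
    exact pow_le_pow_right₀ q1.le (by omega)
  refine C.attain G _ ?_ ?_ ?_ ?_ ?_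
  · apply inv_anti₀ (by positivity)
    exact pow_le_pow_right₀ q1.le (by omega)
  · intro n
    rw [hC]
    dsimp only
    split_ifs
    · exact Or.inl rfl
    · exact Or.inr ⟨1, rfl⟩
    · exact Or.inr ⟨0, by simp⟩
  · intro n b hb h
    refine ⟨hle, ?_⟩
    rw [hC] at h
    dsimp only at h
    split_ifs at h with h1 h2
    · have := congrArg Polynomial.natDegree h
      simp at this
    · have e : n + 1 = (k + 2) * (n / (k + 2) + 1) := by
        have := Nat.div_add_mod n (k + 2)
        rw [mul_add]; omega
      rw [e]; exact hsq _
    · exact absurd (by simpa using h) hb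
  · intro n
    obtain ⟨a, i, hi, rfl⟩ : ∃ a i, i ≤ k + 1 ∧ n = (k + 2) * a + i :=
      ⟨n / (k + 2), n % (k + 2), by exact Nat.lt_succ_iff.1 (Nat.mod_lt n (Nat.succ_pos (k + 1))),
        (Nat.div_add_mod n (k + 2)).symm⟩
    rcases Nat.lt_or_ge k i with h | h
    · obtain rfl : i = k + 1 := by omega
      rw [key2]; exact hle
    · exact (key a i h).ge
  · intro N
    exact ⟨(k + 2) * N, by nlinarith, hsq N, (key N 0 (Nat.zero_le _)).le⟩

theorem spec_zero (G : Gold φ s) : (0 : ℝ) ∈ quadSpectrum φ s := by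
  have q1 := one_lt_q (F := F)
  obtain ⟨C, hC⟩ := cf_of_seq (F := F)
    (fun n => if ∃ a, n = a * a then Polynomial.X ^ 2 else Polynomial.X) (by
      intro n
      split_ifs
      · rw [labX2]; nlinarith
      · rw [labX]; exact q1)
  have hsq : ∀ a, C.P (a * a) = Polynomial.X ^ 2 := by
    intro a; rw [hC]
    exact if_pos ⟨a, rfl⟩
  have hX : ∀ a i, i < 2 * a → C.P (a * a + 1 + i) = Polynomial.X := by
    intro a i hi; rw [hC]
    apply if_neg
    rintro ⟨b, hb⟩
    have h1 : a < b := by by_contra h; push Not at h; nlinarith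
    nlinarith
  have key : ∀ a, crr (C.y (a * a + 1)) (C.δ (a * a + 1)) φ s
      = ((Fintype.card F : ℝ) ^ (4 * a + 2))⁻¹ := by
    intro a
    have e1 : a * a + 1 + 2 * a = (a + 1) * (a + 1) := by ring
    rw [C.crr_run G (a * a + 1) (2 * a) (hX a), e1, C.crr_sq G _ (hsq _), ← e1,
      C.sd_run G _ _ (hX a), C.sd_sq G _ (hsq a)]
    field_simp
    ring
  have hx : (C.y 0)⁻¹ = polyY 0 + (C.y 0)⁻¹ := by rw [polyY_zero, zero_add]
  have hfr : ∀ M : ℕ, _ := fun M : ℕ => C.freq G hx ((Fintype.card F : ℝ)⁻¹ ^ M) (fun N => by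
    refine ⟨(N + M) * (N + M), by nlinarith, by rw [hsq]; exact X2_ne, ?_⟩
    rw [key, ← inv_pow]
    exact pow_le_pow_of_le_one (by positivity) (inv_le_one_of_one_le₀ q1.le) (by omega))
  refine ⟨(C.y 0)⁻¹, C.not_rat hx, C.not_theta G hx (fun N => ?_), ?_⟩
  · exact ⟨N * N, by nlinarith, C.sq_lt _ (hsq N)⟩
  · refine le_antisymm (le_cap (hfr 0) (Eventually.of_forall fun p => rat_nonneg _ p)) ?_
    by_contra hcon
    push Not at hcon
    obtain ⟨M, hM⟩ := exists_pow_lt_of_lt_one hcon (inv_lt_one_of_one_lt₀ q1)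
    exact absurd (cap_le (hfr M)) (not_le.2 hM)

theorem gold_spec (G : Gold φ s) : quadSpectrum φ s
    = {0} ∪ {x : ℝ | ∃ n : ℕ, x = (Fintype.card F : ℝ) ^ (-(n : ℤ) - 2)} := by
  apply Set.Subset.antisymm
  · rintro c ⟨x, hx, hth, rfl⟩
    exact sub_dir G hx hth
  · rintro c (rfl | ⟨n, rfl⟩)
    · exact spec_zero G
    · obtain ⟨k, hk | hk⟩ := Nat.even_or_odd' n
      · convert spec_even G k using 1
        rw [← zpow_natCast, ← zpow_neg]
        congr 1; push_cast [hk]; ring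
      · convert spec_odd G k using 1
        rw [← zpow_natCast, ← zpow_neg]
        congr 1; push_cast [hk]; ring

end sup

/-- Let `φ = [Y, Y, Y, ...] ∈ 𝔽_q((Y⁻¹))` be the root of `X² = YX + 1`
with `|φ| = q` (i.e. of order `-1` in `Y⁻¹`), whose Galois conjugate is `φ^σ = Y − φ`.
Then the quadratic Lagrange spectrum of `φ` is exactly
`Sp(φ) = {0} ∪ {q^{−n−2} : n ∈ ℕ}`. -/
theorem golden_ratio_spectrum
    (F : Type*) [Field F] [Fintype F]
    (φ : LaurentSeries F)
    (hroot : φ ^ 2 = HahnSeries.single (-1 : ℤ) (1 : F) * φ + 1)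
    (horder : φ.order = -1) :
    quadSpectrum φ (HahnSeries.single (-1 : ℤ) (1 : F) - φ)
      = {0} ∪ {x : ℝ | ∃ n : ℕ, x = (Fintype.card F : ℝ) ^ (-(n : ℤ) - 2)} := by
  exact gold_spec (gold_of hroot horder)
end
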